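/- arXiv:1410.6746 — 4 statements merged into one kernel-verified Lean document; each statement's English description precedes it below -/
import Mathlib

section
/- Let τ ∈ ∏_p ℤ_p. Then R_τ is a principal ideal domain if and only if for every nonzero h ∈ ℤ[x] the set S_h = { (p,k) : p prime, k ≥ 1, h(τ_p) ≡ 0 mod p^k } is finite. -/
open Polynomial

/-- The subset `R_τ` of `ℚ[X]`: quotients `h/n` with `h ∈ ℤ[X]`, `n` a positive integer,
such that for every prime `p` the evaluation `h(τ_p)` in the `p`-adic integers is divisible
by `p ^ v_p(n)`. -/
def RtauSet (τ : ∀ p : {p : ℕ // p.Prime}, @PadicInt p.1 ⟨p.2⟩) : Set (Polynomial ℚ) :=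
  {f | ∃ (h : Polynomial ℤ) (n : ℕ), n ≠ 0 ∧
    Polynomial.C (n : ℚ) * f = h.map (algebraMap ℤ ℚ) ∧
    ∀ p : {p : ℕ // p.Prime},
      letI : Fact p.1.Prime := ⟨p.2⟩
      ((p.1 : @PadicInt p.1 ⟨p.2⟩) ^ (n.factorization p.1)) ∣ Polynomial.aeval (τ p) h}

section Helpers

local instance factPrimeOfSubtype (p : {p : ℕ // p.Prime}) : Fact p.1.Prime := ⟨p.2⟩

/-- evaluation at `τ_p` in the `p`-adic numbers -/
noncomputable def evTau (τ : ∀ p : {p : ℕ // p.Prime}, @PadicInt p.1 ⟨p.2⟩)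
    (p : {p : ℕ // p.Prime}) : Polynomial ℚ →ₐ[ℚ] ℚ_[p.1] :=
  Polynomial.aeval ((τ p : ℤ_[p.1]) : ℚ_[p.1])

theorem evTau_map (τ : ∀ p : {p : ℕ // p.Prime}, @PadicInt p.1 ⟨p.2⟩)
    (p : {p : ℕ // p.Prime}) (h : Polynomial ℤ) :
    evTau τ p (h.map (algebraMap ℤ ℚ)) = ((Polynomial.aeval (τ p) h : ℤ_[p.1]) : ℚ_[p.1]) := by
  unfold evTau
  rw [Polynomial.aeval_map_algebraMap]
  exact Polynomial.aeval_algebraMap_apply ℚ_[p.1] (τ p : ℤ_[p.1]) h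

theorem evTau_C_nat (τ : ∀ p : {p : ℕ // p.Prime}, @PadicInt p.1 ⟨p.2⟩)
    (p : {p : ℕ // p.Prime}) (n : ℕ) :
    evTau τ p (Polynomial.C (n : ℚ)) = (n : ℚ_[p.1]) := by
  simp

theorem norm_nat_fact (p : {p : ℕ // p.Prime}) (n : ℕ) (hn : n ≠ 0) :
    ‖(n : ℚ_[p.1])‖ = (p.1 : ℝ) ^ (-(n.factorization p.1 : ℤ)) := by
  rw [Padic.norm_eq_zpow_neg_valuation (by exact_mod_cast hn), Padic.valuation_natCast,
    Nat.factorization_def _ p.2]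

theorem mem_RtauSet (τ : ∀ p : {p : ℕ // p.Prime}, @PadicInt p.1 ⟨p.2⟩) (f : Polynomial ℚ) :
    f ∈ RtauSet τ ↔ ∀ p, ‖evTau τ p f‖ ≤ 1 := by
  have key : ∀ (h : Polynomial ℤ) (n : ℕ), n ≠ 0 →
      Polynomial.C (n : ℚ) * f = h.map (algebraMap ℤ ℚ) → ∀ p : {p : ℕ // p.Prime},
      (((p.1 : ℤ_[p.1]) ^ (n.factorization p.1)) ∣ (Polynomial.aeval (τ p) h : ℤ_[p.1]) ↔
        ‖evTau τ p f‖ ≤ 1) := by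
    intro h n hn e p
    have e2 := congrArg (evTau τ p) e
    rw [map_mul, evTau_C_nat, evTau_map] at e2
    rw [← Ideal.mem_span_singleton, ← PadicInt.norm_le_pow_iff_mem_span_pow]
    rw [PadicInt.norm_def, ← e2, norm_mul, ← norm_nat_fact p n hn]
    have : 0 < ‖(n : ℚ_[p.1])‖ := norm_pos_iff.mpr (by exact_mod_cast hn)
    exact mul_le_iff_le_one_right this
  constructor
  · rintro ⟨h, n, hn, e, H⟩ p
    exact (key h n hn e p).1 (H p)
  · intro H
    obtain ⟨b, hb⟩ := IsLocalization.integerNormalization_map_to_map (nonZeroDivisors ℤ) f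
    have hb0 : (b : ℤ) ≠ 0 := nonZeroDivisors.ne_zero b.2
    set h := IsLocalization.integerNormalization (nonZeroDivisors ℤ) f
    have e : Polynomial.C ((b : ℤ).natAbs : ℚ) * f =
        ((Polynomial.C ((b:ℤ).sign) * h).map (algebraMap ℤ ℚ)) := by
      rw [Polynomial.map_mul, hb, Polynomial.map_C]
      rw [Algebra.smul_def, ← mul_assoc]
      congr 1
      rw [IsScalarTower.algebraMap_apply ℤ ℚ (Polynomial ℚ), Polynomial.algebraMap_apply,
        ← Polynomial.C_mul]
      congr 1
      simp only [algebraMap_int_eq, eq_intCast, Algebra.algebraMap_self, RingHom.id_apply]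
      rw [← Int.cast_mul, Int.sign_mul_self_eq_abs, Int.abs_eq_natAbs]
      simp
    have hn : (b:ℤ).natAbs ≠ 0 := by simpa using hb0
    exact ⟨_, _, hn, e, fun p => (key _ _ hn e p).2 (H p)⟩

theorem norm_nat_other (p q : {p : ℕ // p.Prime}) (h : p ≠ q) : ‖(p.1 : ℚ_[q.1])‖ = 1 := by
  rw [norm_nat_fact q p.1 p.2.ne_zero]
  have : p.1.factorization q.1 = 0 := by
    rw [p.2.factorization]
    apply Finsupp.single_eq_of_ne
    intro e; exact h (Subtype.ext e.symm)
  simp [this]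

variable {τ : ∀ p : {p : ℕ // p.Prime}, @PadicInt p.1 ⟨p.2⟩}
    {S : Subring (Polynomial ℚ)}

theorem C_int_mem (k : ℤ) : Polynomial.C (k : ℚ) ∈ S := by
  have : Polynomial.C (k : ℚ) = ((k : ℤ) : Polynomial ℚ) := by simp
  rw [this]; exact intCast_mem S k

/-- constants in `S` are integers -/
theorem const_mem (hS : ∀ f, f ∈ S ↔ ∀ p, ‖evTau τ p f‖ ≤ 1) (c : ℚ)
    (hc : Polynomial.C c ∈ S) : ∃ k : ℤ, c = k := by
  refine ⟨c.num, ?_⟩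
  have : c.den = 1 := by
    by_contra hd
    obtain ⟨q, hq, hqd⟩ := Nat.exists_prime_and_dvd hd
    have h1 := (hS _).1 hc ⟨q, hq⟩
    haveI : Fact q.Prime := ⟨hq⟩
    have h2 : evTau τ ⟨q, hq⟩ (Polynomial.C c) = (c : ℚ_[q]) := by simp [evTau]
    rw [h2] at h1
    have h3 := Padic.norm_rat_le_one_iff_padicValuation_le_one (p := q) (x := c)
    have := (Rat.padicValuation_le_one_iff).1 (h3.1 h1)
    exact this hqd
  exact (Rat.coe_int_num_of_den_eq_one this).symm

theorem exists_int_add (hS : ∀ f, f ∈ S ↔ ∀ p, ‖evTau τ p f‖ ≤ 1) (M : ℕ) :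
    M ≠ 0 → ∀ u ∈ S, ∃ (k : ℤ), ∃ s ∈ S, u = Polynomial.C (k : ℚ) + Polynomial.C (M : ℚ) * s := by
  induction M using induction_on_primes with
  | zero => intro h; exact absurd rfl h
  | one => intro _ u hu; exact ⟨0, u, hu, by simp⟩
  | prime_mul p a hp ih =>
    intro hM u hu
    have ha : a ≠ 0 := by rintro rfl; simp at hM
    obtain ⟨P, hPp⟩ : ∃ P : {p : ℕ // p.Prime}, P.1 = p := ⟨⟨p, hp⟩, rfl⟩
    subst hPp
    have h1 := (hS u).1 hu
    let z : ℤ_[P.1] := ⟨evTau τ P u, h1 P⟩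
    have hz := PadicInt.sub_zmodRepr_mem z
    set k := PadicInt.zmodRepr z
    have hp0 : (P.1 : ℚ) ≠ 0 := by exact_mod_cast hp.ne_zero
    have hs : Polynomial.C ((P.1 : ℚ)⁻¹) * (u - Polynomial.C (k : ℚ)) ∈ S := by
      rw [hS]
      intro q
      have e : Polynomial.C ((P.1:ℕ) : ℚ) * (Polynomial.C ((P.1 : ℚ)⁻¹) * (u - Polynomial.C (k : ℚ)))
          = u - Polynomial.C (k : ℚ) := by
        rw [← mul_assoc, ← Polynomial.C_mul, mul_inv_cancel₀ hp0]; simp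
      have e2 := congrArg (evTau τ q) e
      rw [map_mul, map_sub (evTau τ q), evTau_C_nat, evTau_C_nat] at e2
      have e3 := congrArg norm e2
      rw [norm_mul] at e3
      by_cases hq : P = q
      · subst hq
        have h5 : ‖evTau τ P u - (k : ℚ_[P.1])‖ ≤ ‖((P.1:ℕ) : ℚ_[P.1])‖ := by
          rw [PadicInt.maximalIdeal_eq_span_p, ← pow_one ((P.1 : ℕ) : ℤ_[P.1]),
            ← PadicInt.norm_le_pow_iff_mem_span_pow] at hz
          have : ‖((P.1:ℕ) : ℚ_[P.1])‖ = (P.1:ℝ) ^ (-((1:ℕ):ℤ)) := by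
            have := Padic.norm_p (p := P.1)
            simpa using this
          rw [this]
          rw [PadicInt.norm_def, PadicInt.coe_sub, PadicInt.coe_natCast] at hz
          exact hz
        rw [← e3] at h5
        have : 0 < ‖((P.1:ℕ) : ℚ_[P.1])‖ := norm_pos_iff.mpr (by exact_mod_cast hp.ne_zero)
        exact (mul_le_iff_le_one_right this).1 h5
      · have h4 := norm_nat_other P q hq
        change ‖((P.1:ℕ) : ℚ_[q.1])‖ = 1 at h4
        rw [h4, one_mul] at e3
        rw [e3]
        have : u - Polynomial.C (k : ℚ) ∈ S := S.sub_mem hu (by exact_mod_cast C_int_mem (S := S) k)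
        have := (hS _).1 this q
        rwa [map_sub, evTau_C_nat] at this
    obtain ⟨k2, s2, hs2, e2⟩ := ih ha _ hs
    refine ⟨k + P.1 * k2, s2, hs2, ?_⟩
    have e : u = Polynomial.C (k : ℚ) + Polynomial.C ((P.1:ℕ) : ℚ) *
        (Polynomial.C ((P.1 : ℚ)⁻¹) * (u - Polynomial.C (k : ℚ))) := by
      rw [← mul_assoc, ← Polynomial.C_mul, mul_inv_cancel₀ hp0]; simp
    rw [e2] at e
    rw [e]
    push_cast
    simp only [Polynomial.C_add, Polynomial.C_mul]
    ring

/-- every rational polynomial has a nonzero integer multiple in `S` -/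
theorem exists_mul_mem (hS : ∀ f, f ∈ S ↔ ∀ p, ‖evTau τ p f‖ ≤ 1) (f : Polynomial ℚ) :
    ∃ (b : ℤ) (h : Polynomial ℤ), b ≠ 0 ∧ Polynomial.C (b : ℚ) * f = h.map (algebraMap ℤ ℚ) ∧
      Polynomial.C (b : ℚ) * f ∈ S := by
  obtain ⟨b, hb⟩ := IsLocalization.integerNormalization_map_to_map (nonZeroDivisors ℤ) f
  have hb0 : (b : ℤ) ≠ 0 := nonZeroDivisors.ne_zero b.2
  have e : Polynomial.C ((b:ℤ) : ℚ) * f =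
      (IsLocalization.integerNormalization (nonZeroDivisors ℤ) f).map (algebraMap ℤ ℚ) := by
    rw [hb, Algebra.smul_def]
    congr 1
  refine ⟨b, _, hb0, e, ?_⟩
  rw [e, hS]
  intro p
  rw [evTau_map]
  exact PadicInt.norm_le_one _

/-- the set `S_h` -/
def setSh (τ : ∀ p : {p : ℕ // p.Prime}, @PadicInt p.1 ⟨p.2⟩) (h : Polynomial ℤ) :
    Set ({p : ℕ // p.Prime} × ℕ) :=
  {x | 1 ≤ x.2 ∧ ((x.1.1 : ℤ_[x.1.1]) ^ x.2) ∣ (Polynomial.aeval (τ x.1) h : ℤ_[x.1.1])}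

theorem exists_M (hS : ∀ f, f ∈ S ↔ ∀ p, ‖evTau τ p f‖ ≤ 1)
    (H : ∀ h : Polynomial ℤ, h ≠ 0 → (setSh τ h).Finite) (f : Polynomial ℚ) (hf : f ≠ 0) :
    ∃ M : ℕ, M ≠ 0 ∧ ∀ q : Polynomial ℚ, q * f ∈ S → Polynomial.C (M : ℚ) * q ∈ S := by
  obtain ⟨b, h, hb, e, -⟩ := exists_mul_mem hS f
  have hbq : Polynomial.C (b : ℚ) ≠ 0 := by simpa using hb
  have hh : h ≠ 0 := by
    rintro rfl
    rw [Polynomial.map_zero] at e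
    exact (mul_ne_zero hbq hf) e
  have hfin := H h hh
  refine ⟨∏ x ∈ hfin.toFinset, x.1.1 ^ x.2, ?_, ?_⟩
  · exact Finset.prod_ne_zero_iff.2 fun x _ => pow_ne_zero _ x.1.2.ne_zero
  intro q hq
  set M := ∏ x ∈ hfin.toFinset, x.1.1 ^ x.2 with hMdef
  rw [hS]
  intro p
  have hM0 : ‖(evTau τ p) (Polynomial.C (M : ℚ))‖ ≤ ‖(Polynomial.aeval (τ p) h : ℤ_[p.1])‖ := by
    rw [evTau_C_nat]
    have hne : (Polynomial.aeval (τ p) h : ℤ_[p.1]) ≠ 0 := by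
      intro h0
      apply Set.infinite_of_injective_forall_mem (s := setSh τ h)
        (f := fun k : ℕ => (p, k + 1)) _ _ hfin
      · intro a b hab; simpa using hab
      · intro k
        refine ⟨by simp, ?_⟩
        rw [h0]; exact dvd_zero _
    set v := (Polynomial.aeval (τ p) h : ℤ_[p.1]).valuation with hv
    have hdvd : ((p.1 : ℤ_[p.1]) ^ v) ∣ (Polynomial.aeval (τ p) h : ℤ_[p.1]) := by
      rw [← Ideal.mem_span_singleton]
      exact (PadicInt.mem_span_pow_iff_le_valuation _ hne v).2 le_rfl
    have hd2 : p.1 ^ v ∣ M := by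
      rcases Nat.eq_zero_or_pos v with h0 | h0
      · rw [h0]; simp
      · exact Finset.dvd_prod_of_mem (fun x : {p : ℕ // p.Prime} × ℕ => x.1.1 ^ x.2)
          (a := (p, v)) (hfin.mem_toFinset.2 ⟨h0, hdvd⟩)
    rw [PadicInt.norm_eq_zpow_neg_valuation hne]
    obtain ⟨c, hc⟩ := hd2
    rw [hc]
    push_cast
    rw [norm_mul, Padic.norm_p_pow]
    have : ‖(c : ℚ_[p.1])‖ ≤ 1 := by simpa using Padic.norm_int_le_one (p := p.1) (c : ℤ)
    exact mul_le_of_le_one_right (by positivity) this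
  have h1 : Polynomial.C (b : ℚ) * (q * f) ∈ S := S.mul_mem (C_int_mem b) hq
  have h2 := (hS _).1 h1 p
  rw [show Polynomial.C (b : ℚ) * (q * f) = (Polynomial.C (b : ℚ) * f) * q by ring, e, map_mul,
    evTau_map, norm_mul] at h2
  rw [map_mul, norm_mul]
  exact (mul_le_mul_of_nonneg_right hM0 (norm_nonneg _)).trans h2

theorem pid_of_finite (hS : ∀ f, f ∈ S ↔ ∀ p, ‖evTau τ p f‖ ≤ 1)
    (H : ∀ h : Polynomial ℤ, h ≠ 0 → (setSh τ h).Finite) : IsPrincipalIdealRing S := by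
  constructor
  intro I
  by_cases hI : I = ⊥
  · subst hI; infer_instance
  -- membership of polynomials
  let T : Set (Polynomial ℚ) := {f | ∃ hf : f ∈ S, (⟨f, hf⟩ : S) ∈ I}
  have Tadd : ∀ f g, f ∈ T → g ∈ T → f + g ∈ T := by
    rintro f g ⟨hf, hf'⟩ ⟨hg, hg'⟩
    exact ⟨S.add_mem hf hg, I.add_mem hf' hg'⟩
  have Tmul : ∀ f g, f ∈ S → g ∈ T → f * g ∈ T := by
    rintro f g hf ⟨hg, hg'⟩
    refine ⟨S.mul_mem hf hg, ?_⟩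
    have e : (⟨f * g, S.mul_mem hf hg⟩ : S) = (⟨f, hf⟩ : S) * ⟨g, hg⟩ := rfl
    rw [e]
    exact Ideal.mul_mem_left I _ hg'
  have Tsub : ∀ f g, f ∈ T → g ∈ T → f - g ∈ T := by
    rintro f g ⟨hf, hf'⟩ ⟨hg, hg'⟩
    refine ⟨S.sub_mem hf hg, ?_⟩
    have e : (⟨f - g, S.sub_mem hf hg⟩ : S) = ⟨f, hf⟩ - ⟨g, hg⟩ := rfl
    rw [e]
    exact Submodule.sub_mem I hf' hg'
  obtain ⟨x, hxI, hx0⟩ := Submodule.exists_mem_ne_zero_of_ne_bot hI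
  have hex : ∃ n : ℕ, ∃ f ∈ T, f ≠ 0 ∧ f.natDegree = n :=
    ⟨_, x.1, ⟨x.2, hxI⟩, fun h => hx0 (Subtype.ext h), rfl⟩
  classical
  obtain ⟨f0, hf0T, hf00, hdeg⟩ := Nat.find_spec hex
  have hmin : ∀ f ∈ T, f ≠ 0 → f0.natDegree ≤ f.natDegree := by
    intro f hf h0
    rw [hdeg]
    exact Nat.find_min' hex ⟨f, hf, h0, rfl⟩
  have hdvd : ∀ f ∈ T, ∃ q, f = q * f0 := by
    intro f hf
    obtain ⟨b, -, hb, -, hbS⟩ := exists_mul_mem hS (f / f0)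
    have hbq : Polynomial.C (b : ℚ) ≠ 0 := by simpa using hb
    have hr : Polynomial.C (b : ℚ) * (f % f0) ∈ T := by
      have : Polynomial.C (b : ℚ) * (f % f0) =
          Polynomial.C (b : ℚ) * f - (Polynomial.C (b : ℚ) * (f / f0)) * f0 := by
        have := EuclideanDomain.div_add_mod f f0
        linear_combination (Polynomial.C (b : ℚ)) * this
      rw [this]
      exact Tsub _ _ (Tmul _ _ (C_int_mem b) hf) (Tmul _ _ hbS hf0T)
    have hz : f % f0 = 0 := by
      by_contra hne
      have h1 := hmin _ hr (mul_ne_zero hbq hne)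
      rw [Polynomial.natDegree_C_mul (by exact_mod_cast hb)] at h1
      have h2 := Polynomial.degree_mod_lt f hf00
      have h3 := Polynomial.natDegree_lt_natDegree hne h2
      omega
    refine ⟨f / f0, ?_⟩
    have := EuclideanDomain.div_add_mod f f0
    rw [hz, add_zero] at this
    rw [mul_comm]; exact this.symm
  obtain ⟨M, hM, hMq⟩ := exists_M hS H f0 hf00
  have hMQ : (M : ℚ) ≠ 0 := by exact_mod_cast hM
  let d : Polynomial ℚ := Polynomial.C ((M : ℚ)⁻¹) * f0
  have hMd : Polynomial.C (M : ℚ) * d = f0 := by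
    simp only [d]
    rw [← mul_assoc, ← Polynomial.C_mul, mul_inv_cancel₀ hMQ]; simp
  let K : Ideal ℤ :=
    { carrier := {m | Polynomial.C (m : ℚ) * d ∈ T}
      zero_mem' := by
        change Polynomial.C ((0 : ℤ) : ℚ) * d ∈ T
        simp only [Int.cast_zero, Polynomial.C_0, zero_mul]
        exact ⟨S.zero_mem, I.zero_mem⟩
      add_mem' := by
        intro a b ha hb
        change Polynomial.C ((a + b : ℤ) : ℚ) * d ∈ T
        rw [Int.cast_add, Polynomial.C_add, add_mul]
        exact Tadd _ _ ha hb
      smul_mem' := by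
        intro c a ha
        change Polynomial.C ((c * a : ℤ) : ℚ) * d ∈ T
        rw [Int.cast_mul, Polynomial.C_mul, mul_assoc]
        exact Tmul _ _ (C_int_mem c) ha }
  obtain ⟨m0, hm0⟩ := (IsPrincipalIdealRing.principal K).principal
  have hK : ∀ m : ℤ, m ∈ K ↔ Polynomial.C (m : ℚ) * d ∈ T := fun m => Iff.rfl
  have hK2 : ∀ m : ℤ, m ∈ K ↔ m0 ∣ m := by
    intro m; rw [hm0]; exact Ideal.mem_span_singleton
  obtain ⟨hgS, hgI⟩ := (hK m0).1 ((hK2 m0).2 dvd_rfl)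
  have hMK : (M : ℤ) ∈ K := by
    rw [hK, Int.cast_natCast, hMd]; exact hf0T
  obtain ⟨j', hj'⟩ := (hK2 _).1 hMK
  refine ⟨⟨_, hgS⟩, ?_⟩
  apply le_antisymm
  · intro f hfI
    obtain ⟨q, hq⟩ := hdvd f.1 ⟨f.2, hfI⟩
    have hu := hMq q (hq ▸ f.2)
    obtain ⟨k, s, hs, hk⟩ := exists_int_add hS M hM _ hu
    have hfd : f.1 = Polynomial.C (k : ℚ) * d + s * f0 := by
      rw [hq, ← hMd]
      linear_combination d * hk
    have hkK : k ∈ K := by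
      rw [hK]
      have : Polynomial.C (k : ℚ) * d = f.1 - s * f0 := by rw [hfd]; ring
      rw [this]
      exact Tsub _ _ ⟨f.2, hfI⟩ (Tmul _ _ hs hf0T)
    obtain ⟨j, hj⟩ := (hK2 _).1 hkK
    refine Ideal.mem_span_singleton.2 ⟨⟨Polynomial.C (j : ℚ) + s * Polynomial.C (j' : ℚ),
      S.add_mem (C_int_mem j) (S.mul_mem hs (C_int_mem j'))⟩, Subtype.ext ?_⟩
    change f.1 = Polynomial.C (m0 : ℚ) * d * (Polynomial.C (j : ℚ) + s * Polynomial.C (j' : ℚ))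
    have h1 : Polynomial.C (M : ℚ) = Polynomial.C (m0 : ℚ) * Polynomial.C (j' : ℚ) := by
      rw [← Polynomial.C_mul, ← Int.cast_mul, ← hj']; simp
    rw [hfd, ← hMd, hj, h1, Int.cast_mul, Polynomial.C_mul]
    ring
  · exact (Ideal.span_singleton_le_iff_mem I).2 hgI

theorem finite_of_pid (hS : ∀ f, f ∈ S ↔ ∀ p, ‖evTau τ p f‖ ≤ 1)
    (hP : IsPrincipalIdealRing S) (h : Polynomial ℤ) (hh : h ≠ 0) : (setSh τ h).Finite := by
  let H : Polynomial ℚ := h.map (algebraMap ℤ ℚ)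
  have hH0 : H ≠ 0 := by
    intro h0
    exact hh ((Polynomial.map_eq_zero_iff (algebraMap ℤ ℚ).injective_int).1 h0)
  let I : Ideal S := Ideal.span {x | ∃ c : ℚ, x.1 = Polynomial.C c * H}
  obtain ⟨g, hg⟩ := (hP.principal I).principal
  have hgI : g ∈ I := by rw [hg]; exact Ideal.mem_span_singleton_self g
  have hI : ∀ x ∈ I, H ∣ x.1 := by
    intro x hx
    have : I ≤ Ideal.comap S.subtype (Ideal.span {H}) := by
      apply Ideal.span_le.2
      rintro y ⟨c, hc⟩
      change S.subtype y ∈ Ideal.span {H}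
      rw [Ideal.mem_span_singleton]
      exact ⟨Polynomial.C c, by rw [mul_comm]; exact hc⟩
    exact Ideal.mem_span_singleton.1 (this hx)
  obtain ⟨u, hu⟩ := hI g hgI
  have hc : ∀ c : ℚ, Polynomial.C c * H ∈ S → ∃ s ∈ S, Polynomial.C c = u * s := by
    intro c hcS
    have : (⟨_, hcS⟩ : S) ∈ I := Ideal.subset_span ⟨c, rfl⟩
    rw [hg] at this
    obtain ⟨s, hs⟩ := Ideal.mem_span_singleton.1 this
    refine ⟨s.1, s.2, ?_⟩
    have hs' : Polynomial.C c * H = g.1 * s.1 := congrArg Subtype.val hs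
    rw [hu] at hs'
    apply mul_left_cancel₀ hH0
    linear_combination hs'
  have hHS : H ∈ S := by
    rw [hS]; intro p; rw [evTau_map]; exact PadicInt.norm_le_one _
  obtain ⟨s1, hs1, e1⟩ := hc 1 (by simpa using hHS)
  rw [Polynomial.C_1] at e1
  have hs1u : IsUnit s1 := IsUnit.of_mul_eq_one u (by rw [mul_comm]; exact e1.symm)
  obtain ⟨a, ha, ha'⟩ := Polynomial.isUnit_iff.1 hs1u
  obtain ⟨N, hN⟩ := const_mem hS a (ha' ▸ hs1)
  have hN0 : N ≠ 0 := by
    rintro rfl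
    rw [hN] at ha
    simp at ha
  -- every `p ^ k` in `S_h` divides `N`
  have hdiv : ∀ x ∈ setSh τ h, x.1.1 ^ x.2 ∣ N.natAbs := by
    rintro ⟨p, k⟩ ⟨hk, hx⟩
    have hp0 : ((p.1 ^ k : ℕ) : ℚ) ≠ 0 := by exact_mod_cast pow_ne_zero _ p.2.ne_zero
    have hmem : Polynomial.C (((p.1 ^ k : ℕ) : ℚ)⁻¹) * H ∈ S := by
      rw [hS]
      apply (mem_RtauSet τ _).1
      refine ⟨h, p.1 ^ k, pow_ne_zero _ p.2.ne_zero, ?_, ?_⟩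
      · rw [← mul_assoc, ← Polynomial.C_mul, mul_inv_cancel₀ hp0]; simp [H]
      · intro q
        by_cases hq : p = q
        · subst hq
          have : (p.1 ^ k).factorization p.1 = k := by simp [p.2.factorization]
          rw [this]; exact hx
        · have : (p.1 ^ k).factorization q.1 = 0 := by
            rw [p.2.factorization_pow]
            apply Finsupp.single_eq_of_ne
            intro e; exact hq (Subtype.ext e.symm)
          rw [this, pow_zero]; exact one_dvd _
    obtain ⟨s, hs, e⟩ := hc _ hmem
    have hsN : s = Polynomial.C ((((p.1 ^ k : ℕ) : ℚ)⁻¹) * a) := by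
      rw [Polynomial.C_mul, ha', e]
      linear_combination s * e1
    obtain ⟨j, hj⟩ := const_mem hS _ (hsN ▸ hs)
    rw [← Int.natCast_dvd]
    refine ⟨j, ?_⟩
    rw [hN] at hj
    have : (N : ℚ) = ((p.1 ^ k : ℕ) : ℚ) * j := by
      rw [← hj, ← mul_assoc, mul_inv_cancel₀ hp0, one_mul]
    exact_mod_cast this
  have hNpos : 0 < N.natAbs := Int.natAbs_pos.2 hN0
  let φ : {p : ℕ // p.Prime} × ℕ → ℕ × ℕ := fun x => (x.1.1, x.2)
  have hφ : Function.Injective φ := by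
    rintro ⟨p, k⟩ ⟨q, l⟩ e
    simp only [φ, Prod.mk.injEq] at e
    exact Prod.ext (Subtype.ext e.1) e.2
  apply Set.Finite.of_finite_image (f := φ) _ hφ.injOn
  apply ((Set.finite_Iic N.natAbs).prod (Set.finite_Iic N.natAbs)).subset
  rintro _ ⟨x, hx, rfl⟩
  have h1 := Nat.le_of_dvd hNpos (hdiv x hx)
  refine ⟨?_, ?_⟩
  · exact (Nat.le_self_pow (by have := hx.1; omega) _).trans h1
  · exact (Nat.lt_pow_self x.1.2.one_lt).le.trans h1

end Helpers

/-- `R_τ` is a PID iff for each nonzero `h ∈ ℤ[X]` the set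
`S_h = {(p,k) : p prime, k ≥ 1, p^k ∣ h(τ_p)}` is finite. -/
theorem stmt_9 (τ : ∀ p : {p : ℕ // p.Prime}, @PadicInt p.1 ⟨p.2⟩)
    (S : Subring (Polynomial ℚ)) (hS : (S : Set (Polynomial ℚ)) = RtauSet τ) :
    IsPrincipalIdealRing S ↔
      ∀ h : Polynomial ℤ, h ≠ 0 →
        {x : {p : ℕ // p.Prime} × ℕ | 1 ≤ x.2 ∧
          letI : Fact x.1.1.Prime := ⟨x.1.2⟩
          ((x.1.1 : @PadicInt x.1.1 ⟨x.1.2⟩) ^ x.2) ∣ Polynomial.aeval (τ x.1) h}.Finite := by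
  have hS' : ∀ f, f ∈ S ↔ ∀ p : {p : ℕ // p.Prime}, (letI : Fact p.1.Prime := ⟨p.2⟩; ‖evTau τ p f‖ ≤ 1) := by
    intro f
    rw [← SetLike.mem_coe, hS]
    exact mem_RtauSet τ f
  exact ⟨fun hP h hh => finite_of_pid hS' hP h hh, fun H => pid_of_finite hS' H⟩
end

section
/- There exist 2^ℵ₀ elements τ ∈ ∏_p ℤ_p such that R_τ is a principal ideal domain, and the corresponding rings R_τ include 2^ℵ₀ pairwise non-isomorphic rings. -/
open Polynomial

abbrev PP := {p : ℕ // p.Prime}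

instance factPP (p : PP) : Fact p.1.Prime := ⟨p.2⟩

abbrev TT := ∀ p : PP, @PadicInt p.1 ⟨p.2⟩

noncomputable def ev (τ : TT) (p : PP) : ℚ[X] →ₐ[ℚ] ℚ_[p.1] :=
  Polynomial.aeval ((τ p : ℤ_[p.1]) : ℚ_[p.1])

theorem ev_int (τ : TT) (p : PP) (h : ℤ[X]) :
    ev τ p (h.map (algebraMap ℤ ℚ)) = ((Polynomial.aeval (τ p) h : ℤ_[p.1]) : ℚ_[p.1]) := by
  unfold ev
  rw [Polynomial.aeval_map_algebraMap]
  have := Polynomial.aeval_algebraMap_apply ℚ_[p.1] (τ p : ℤ_[p.1]) h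
  exact this

theorem ev_C (τ : TT) (p : PP) (c : ℚ) : ev τ p (C c) = (c : ℚ_[p.1]) := by
  simp [ev]

noncomputable def G (τ : TT) : Subring ℚ[X] :=
  ⨅ p : PP, (PadicInt.subring p.1).comap (ev τ p : ℚ[X] →+* ℚ_[p.1])

theorem mem_G (τ : TT) (f : ℚ[X]) : f ∈ G τ ↔ ∀ p, ‖ev τ p f‖ ≤ 1 := by
  simp only [G, Subring.mem_iInf, Subring.mem_comap]
  rfl

theorem norm_nat (p : PP) (n : ℕ) (hn : n ≠ 0) :
    ‖(n : ℚ_[p.1])‖ = (p.1 : ℝ) ^ (-(n.factorization p.1 : ℤ)) := by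
  rw [Padic.norm_eq_zpow_neg_valuation (by exact_mod_cast hn), Padic.valuation_natCast,
    Nat.factorization_def _ p.2]

theorem exists_int (f : ℚ[X]) : ∃ (n : ℕ) (h : ℤ[X]), n ≠ 0 ∧
    C (n : ℚ) * f = h.map (algebraMap ℤ ℚ) := by
  obtain ⟨b, hb, h⟩ := IsLocalization.integerNormalization_spec (nonZeroDivisors ℤ) f
  have hb0 : b ≠ 0 := nonZeroDivisors.ne_zero hb
  obtain ⟨n, rfl | rfl⟩ := Int.eq_nat_or_neg b
  · refine ⟨n, IsLocalization.integerNormalization (nonZeroDivisors ℤ) f,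
      by simpa using hb0, ?_⟩
    rw [h, zsmul_eq_mul]
    simp
  · refine ⟨n, - IsLocalization.integerNormalization (nonZeroDivisors ℤ) f,
      by simpa using hb0, ?_⟩
    rw [Polynomial.map_neg, h, zsmul_eq_mul]
    simp

theorem mem_Rtau (τ : TT) (f : ℚ[X]) : f ∈ RtauSet τ ↔ ∀ p, ‖ev τ p f‖ ≤ 1 := by
  have key : ∀ (n : ℕ) (h : ℤ[X]), n ≠ 0 → C (n : ℚ) * f = h.map (algebraMap ℤ ℚ) → ∀ p : PP,
      (((p.1 : ℤ_[p.1]) ^ (n.factorization p.1)) ∣ Polynomial.aeval (τ p) h ↔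
        ‖ev τ p f‖ ≤ 1) := by
    intro n h hn e p
    rw [← Ideal.mem_span_singleton, ← PadicInt.norm_le_pow_iff_mem_span_pow, PadicInt.norm_def,
      ← ev_int, ← e, map_mul, ev_C, norm_mul, ← norm_nat p n hn]
    have : 0 < ‖(n : ℚ_[p.1])‖ := norm_pos_iff.2 (by exact_mod_cast hn)
    simp only [Rat.cast_natCast]
    exact mul_le_iff_le_one_right this
  constructor
  · rintro ⟨h, n, hn, e, H⟩ p
    exact (key n h hn e p).1 (H p)
  · intro H
    obtain ⟨n, h, hn, e⟩ := exists_int f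
    exact ⟨h, n, hn, e, fun p => (key n h hn e p).2 (H p)⟩

theorem G_eq (τ : TT) : (G τ : Set ℚ[X]) = RtauSet τ := by
  ext f
  rw [mem_Rtau, SetLike.mem_coe, mem_G]

theorem int_mem_G (τ : TT) (h : ℤ[X]) : h.map (algebraMap ℤ ℚ) ∈ G τ := by
  rw [mem_G]
  intro p
  rw [ev_int]
  exact PadicInt.norm_le_one _

theorem C_nat_mem (τ : TT) (n : ℕ) : C (n : ℚ) ∈ G τ := by
  simp

/-- the finiteness condition -/
def Good (τ : TT) : Prop := ∀ h : ℤ[X], h ≠ 0 →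
  (∀ p : PP, Polynomial.aeval (τ p : ℤ_[p.1]) h ≠ 0) ∧
  {p : PP | ¬ IsUnit (Polynomial.aeval (τ p : ℤ_[p.1]) h)}.Finite

theorem norm_prime_ne (p q : PP) (h : q ≠ p) : ‖(p.1 : ℚ_[q.1])‖ = 1 := by
  rw [Padic.norm_natCast_eq_one_iff]
  exact (Nat.coprime_primes q.2 p.2).2 (fun e => h (Subtype.ext e))

theorem exists_normalize (τ : TT) (hτ : Good τ) (f : ℚ[X]) (hf : f ≠ 0) :
    ∃ c : ℚ, c ≠ 0 ∧ ∀ p, ‖ev τ p (C c * f)‖ = 1 := by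
  obtain ⟨n, h, hn, e⟩ := exists_int f
  have hh : h ≠ 0 := by
    rintro rfl
    simp [hn, hf] at e
  obtain ⟨h0, hfin⟩ := hτ h hh
  set v : PP → ℕ := fun p => (Polynomial.aeval (τ p : ℤ_[p.1]) h).valuation with hv
  set m : ℚ := ∏ p ∈ hfin.toFinset, (p.1 : ℚ) ^ v p with hm
  have hm0 : m ≠ 0 := by
    rw [hm]
    exact Finset.prod_ne_zero_iff.2 fun p _ => pow_ne_zero _ (by exact_mod_cast p.2.ne_zero)
  refine ⟨m⁻¹ * n, mul_ne_zero (inv_ne_zero hm0) (by exact_mod_cast hn), fun q => ?_⟩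
  rw [C_mul, mul_assoc, e, map_mul, ev_C, ev_int, norm_mul]
  have h1 : ‖(m : ℚ_[q.1])‖ = ‖Polynomial.aeval (τ q : ℤ_[q.1]) h‖ := by
    rw [hm]
    push_cast
    rw [norm_prod]
    by_cases hq : q ∈ hfin.toFinset
    · rw [Finset.prod_eq_single_of_mem q hq, PadicInt.norm_eq_zpow_neg_valuation (h0 q), norm_pow,
        Padic.norm_p]
      · simp [hv]
      · intro p _ hpq
        rw [norm_pow, norm_prime_ne p q hpq.symm, one_pow]
    · rw [Finset.prod_eq_one]
      · simp only [Set.Finite.mem_toFinset, Set.mem_ofPred_eq, not_not] at hq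
        exact (PadicInt.isUnit_iff.1 hq).symm
      · intro p hp
        rw [norm_pow, norm_prime_ne p q (fun e => hq (e ▸ hp)), one_pow]
  have h2 : ‖(m : ℚ_[q.1])‖ ≠ 0 := norm_ne_zero_iff.2 (by exact_mod_cast hm0)
  rw [Rat.cast_inv, norm_inv, ← PadicInt.norm_def, ← h1, inv_mul_cancel₀ h2]

theorem exists_rep (τ : TT) (d : ℕ) (hd : d ≠ 0) : ∀ f ∈ G τ, ∃ a : ℕ, ∃ r ∈ G τ,
    f = C (a : ℚ) + C (d : ℚ) * r := by
  induction d using Nat.recOnMul with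
  | zero => exact absurd rfl hd
  | one => exact fun f hf => ⟨0, f, hf, by simp⟩
  | prime p hp =>
    intro f hf
    obtain ⟨P, rfl⟩ : ∃ P : PP, P.1 = p := ⟨⟨p, hp⟩, rfl⟩
    have hf' := (mem_G τ f).1 hf
    obtain ⟨a, -, ha⟩ := PadicInt.exists_mem_range (p := P.1) ⟨ev τ P f, hf' P⟩
    rw [PadicInt.maximalIdeal_eq_span_p] at ha
    have ha2 := (PadicInt.norm_le_pow_iff_mem_span_pow _ 1).2 (by rwa [pow_one])
    have hp0 : (P.1 : ℚ) ≠ 0 := by exact_mod_cast hp.ne_zero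
    refine ⟨a, C ((P.1 : ℚ)⁻¹) * (f - C (a : ℚ)), ?_, ?_⟩
    · rw [mem_G]
      intro q
      rw [map_mul, map_sub, ev_C, ev_C, norm_mul, Rat.cast_inv, norm_inv, Rat.cast_natCast,
        Rat.cast_natCast]
      by_cases hq : q = P
      · subst hq
        rw [PadicInt.norm_def] at ha2
        have hp0 : (0 : ℝ) < q.1 := by exact_mod_cast hp.pos
        rw [Padic.norm_p, inv_inv]
        have h3 : ‖ev τ q f - (a : ℚ_[q.1])‖ ≤ (q.1 : ℝ)⁻¹ := by
          rw [Nat.cast_one, zpow_neg, zpow_one] at ha2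
          exact ha2
        calc _ ≤ (q.1 : ℝ) * (q.1 : ℝ)⁻¹ := by gcongr
          _ = 1 := mul_inv_cancel₀ hp0.ne'
      · rw [norm_prime_ne P q hq, inv_one, one_mul]
        have := (mem_G τ _).1 ((G τ).sub_mem hf (C_nat_mem τ a)) q
        rwa [map_sub, ev_C, Rat.cast_natCast] at this
    · rw [← mul_assoc, ← C_mul, mul_inv_cancel₀ hp0]
      simp
  | mul a b iha ihb =>
    intro f hf
    obtain ⟨x, r, hr, e⟩ := iha (left_ne_zero_of_mul hd) f hf
    obtain ⟨y, s, hs, e'⟩ := ihb (right_ne_zero_of_mul hd) r hr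
    refine ⟨x + a * y, s, hs, ?_⟩
    rw [e, e']
    push_cast
    simp only [C_add, C_mul]
    ring

/-- The extension of an ideal of `G τ` to `ℚ[X]`. -/
noncomputable def ext (τ : TT) (I : Ideal (G τ)) : Ideal ℚ[X] where
  carrier := {f | ∃ n : ℕ, n ≠ 0 ∧ ∃ i ∈ I, C (n : ℚ) * f = (i : ℚ[X])}
  zero_mem' := ⟨1, one_ne_zero, 0, I.zero_mem, by simp⟩
  add_mem' := by
    rintro f g ⟨n, hn, i, hi, e⟩ ⟨m, hm, j, hj, e'⟩
    refine ⟨n * m, mul_ne_zero hn hm, ⟨_, C_nat_mem τ m⟩ * i + ⟨_, C_nat_mem τ n⟩ * j,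
      I.add_mem (I.mul_mem_left _ hi) (I.mul_mem_left _ hj), ?_⟩
    push_cast
    rw [← e, ← e', C_mul]
    ring
  smul_mem' := by
    rintro q f ⟨n, hn, i, hi, e⟩
    obtain ⟨m, h, hm, e'⟩ := exists_int q
    refine ⟨n * m, mul_ne_zero hn hm, ⟨_, int_mem_G τ h⟩ * i, I.mul_mem_left _ hi, ?_⟩
    push_cast
    rw [← e, ← e', C_mul, smul_eq_mul]
    ring

theorem mem_ext (τ : TT) (I : Ideal (G τ)) (f : ℚ[X]) :
    f ∈ ext τ I ↔ ∃ n : ℕ, n ≠ 0 ∧ ∃ i ∈ I, C (n : ℚ) * f = (i : ℚ[X]) := Iff.rfl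

theorem pid (τ : TT) (hτ : Good τ) : IsPrincipalIdealRing (G τ) := by
  refine ⟨fun I => ?_⟩
  by_cases hI : I = ⊥
  · rw [hI]; exact bot_isPrincipal
  obtain ⟨g, hg⟩ := (IsPrincipalIdealRing.principal (ext τ I)).principal
  have hsub : ∀ i ∈ I, (i : ℚ[X]) ∈ ext τ I := fun i hi =>
    ⟨1, one_ne_zero, i, hi, by simp⟩
  have hg0 : g ≠ 0 := by
    rintro rfl
    apply hI
    rw [eq_bot_iff]
    intro i hi
    have := hsub i hi
    rw [hg] at this
    simpa using this
  obtain ⟨c, hc, hcn⟩ := exists_normalize τ hτ g hg0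
  set g' : ℚ[X] := C c * g with hg'
  have hg'G : g' ∈ G τ := (mem_G τ _).2 fun p => (hcn p).le
  have hg'mem : g' ∈ ext τ I := Ideal.mul_mem_left _ _ (by
    rw [hg]; exact Submodule.mem_span_singleton_self g)
  have hdvd : ∀ i ∈ I, g' ∣ (i : ℚ[X]) := by
    intro i hi
    have := hsub i hi
    rw [hg] at this
    have h1 : g ∣ (i : ℚ[X]) := Ideal.mem_span_singleton.1 this
    refine dvd_trans ⟨C c⁻¹, ?_⟩ h1
    rw [hg', mul_right_comm, ← C_mul, mul_inv_cancel₀ hc]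
    simp
  let g₀ : G τ := ⟨g', hg'G⟩
  let N : ℕ → G τ := fun n => ⟨_, C_nat_mem τ n⟩
  have hex : ∃ n : ℕ, n ≠ 0 ∧ N n * g₀ ∈ I := by
    obtain ⟨n, hn, i, hi, e⟩ := hg'mem
    refine ⟨n, hn, ?_⟩
    have : N n * g₀ = i := Subtype.ext e
    rwa [this]
  classical
  set d := Nat.find hex with hd
  obtain ⟨hd0, hdI⟩ := Nat.find_spec hex
  refine ⟨N d * g₀, le_antisymm ?_ ?_⟩
  · intro y hy
    obtain ⟨f, hf⟩ := hdvd y hy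
    have hfG : f ∈ G τ := by
      rw [mem_G]
      intro p
      have := (mem_G τ _).1 y.2 p
      rwa [hf, map_mul, norm_mul, hcn, one_mul] at this
    obtain ⟨a, r, hr, e⟩ := exists_rep τ d hd0 f hfG
    have hy2 : y = N a * g₀ + ⟨r, hr⟩ * (N d * g₀) := by
      apply Subtype.ext
      simp only [Subring.coe_add, Subring.coe_mul, N, g₀]
      rw [hf, e]
      ring
    have haI : N a * g₀ ∈ I := by
      have := I.sub_mem hy (I.mul_mem_left ⟨r, hr⟩ hdI)
      rwa [hy2, add_sub_cancel_right] at this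
    have hdiv : N a = N (a / d) * N d + N (a % d) := by
      apply Subtype.ext
      simp only [Subring.coe_add, Subring.coe_mul, N, ← C_mul, ← C_add]
      congr 1
      exact_mod_cast (Nat.div_add_mod' a d).symm
    have hmodI : N (a % d) * g₀ ∈ I := by
      have := I.sub_mem haI (I.mul_mem_left (N (a / d)) hdI)
      rwa [hdiv, add_mul, mul_assoc, add_sub_cancel_left] at this
    have hmod : a % d = 0 := by
      by_contra hne
      exact Nat.find_min hex (Nat.mod_lt a (Nat.pos_of_ne_zero hd0)) ⟨hne, hmodI⟩
    have hN0 : N 0 = 0 := Subtype.ext (by simp [N])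
    rw [hmod, hN0, add_zero] at hdiv
    refine Ideal.mem_span_singleton.2 ⟨N (a / d) + ⟨r, hr⟩, ?_⟩
    rw [hy2, hdiv]
    ring
  · exact (Ideal.span_singleton_le_iff_mem I).2 hdI

theorem G_injective : Function.Injective G := by
  intro τ σ h
  funext p
  have hmem : ∀ (τ : TT) (n : ℕ) (a : ℕ), C (((p.1 : ℚ) ^ n)⁻¹) * (X - C (a : ℚ)) ∈ G τ ↔
      ‖τ p - (a : ℤ_[p.1])‖ ≤ (p.1 : ℝ) ^ (-n : ℤ) := by
    intro τ n a
    have hev : ∀ q : PP, ev τ q (X - C (a : ℚ)) = ((τ q - (a : ℤ_[q.1]) : ℤ_[q.1]) : ℚ_[q.1]) := by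
      intro q
      rw [map_sub, ev_C]
      simp [ev]
    have hp0 : (0 : ℝ) < (p.1 : ℝ) := by exact_mod_cast p.2.pos
    rw [mem_G]
    constructor
    · intro H
      have := H p
      rw [map_mul, ev_C, hev, norm_mul, ← PadicInt.norm_def] at this
      push_cast at this
      rw [norm_inv, norm_pow, Padic.norm_p, inv_pow, inv_inv] at this
      rw [zpow_neg, zpow_natCast]
      rwa [← one_div, le_div_iff₀ (by positivity), mul_comm]
    · intro H q
      rw [map_mul, ev_C, hev, norm_mul, ← PadicInt.norm_def]
      push_cast
      by_cases hq : q = p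
      · subst hq
        rw [norm_inv, norm_pow, Padic.norm_p, inv_pow, inv_inv]
        rw [zpow_neg, zpow_natCast] at H
        rwa [← one_div, le_div_iff₀ (by positivity), mul_comm] at H
      · rw [norm_inv, norm_pow, norm_prime_ne p q hq, one_pow, inv_one, one_mul]
        exact PadicInt.norm_le_one _
  apply eq_of_sub_eq_zero
  rw [← norm_le_zero_iff]
  have hb : ∀ n : ℕ, ‖τ p - σ p‖ ≤ (p.1 : ℝ) ^ (-n : ℤ) := by
    intro n
    have h1 : ‖τ p - ((τ p).appr n : ℤ_[p.1])‖ ≤ (p.1 : ℝ) ^ (-n : ℤ) :=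
      (PadicInt.norm_le_pow_iff_mem_span_pow _ n).2 (PadicInt.appr_spec n (τ p))
    have h2 : ‖σ p - ((τ p).appr n : ℤ_[p.1])‖ ≤ (p.1 : ℝ) ^ (-n : ℤ) := by
      rw [← hmem, ← h, hmem]
      exact h1
    rw [PadicInt.norm_le_pow_iff_mem_span_pow] at h1 h2 ⊢
    have := Ideal.sub_mem _ h1 h2
    rwa [sub_sub_sub_cancel_right] at this
  have hlim : Filter.Tendsto (fun n : ℕ => (p.1 : ℝ) ^ (-n : ℤ)) Filter.atTop (nhds 0) := by
    have : ∀ n : ℕ, (p.1 : ℝ) ^ (-n : ℤ) = ((p.1 : ℝ)⁻¹) ^ n := by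
      intro n; simp
    simp_rw [this]
    apply tendsto_pow_atTop_nhds_zero_of_lt_one (by positivity)
    exact inv_lt_one_of_one_lt₀ (by exact_mod_cast p.2.one_lt)
  exact ge_of_tendsto' hlim hb

/-- Isomorphisms out of `G τ` are determined by the image of `X`. -/
theorem iso_det (τ σ σ' : TT) (φ : G τ ≃+* G σ) (ψ : G τ ≃+* G σ') (x : G τ) (hx : (x : ℚ[X]) = X)
    (h : (φ x : ℚ[X]) = ψ x) : σ = σ' := by
  have key : ∀ f : G τ, (φ f : ℚ[X]) = ψ f := by
    intro f
    obtain ⟨n, h', hn, e⟩ := exists_int (f : ℚ[X])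
    have e1 : (n : G τ) * f = Polynomial.aeval x h' := by
      apply Subtype.ext
      have h2 : ((Polynomial.aeval x h' : G τ) : ℚ[X]) = Polynomial.aeval (x : ℚ[X]) h' :=
        (Polynomial.aeval_algHom_apply ((G τ).subtype.toIntAlgHom) x h').symm
      rw [h2, hx, ← Polynomial.aeval_map_algebraMap ℚ, Polynomial.aeval_X_left_apply, ← e]
      simp
    have e2 : ∀ (ρ : TT) (θ : G τ ≃+* G ρ), (n : ℚ[X]) * (θ f : ℚ[X]) =
        Polynomial.aeval (θ x : ℚ[X]) h' := by
      intro ρ θ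
      have := Polynomial.aeval_algHom_apply
        (((G ρ).subtype.comp (θ : G τ →+* G ρ)).toIntAlgHom) x h'
      rw [← e1] at this
      simp at this
      exact this.symm
    have e3 := e2 σ φ
    rw [h, ← e2 σ' ψ] at e3
    exact mul_left_cancel₀ (by exact_mod_cast hn) e3
  apply G_injective
  ext f
  constructor
  · intro hf
    have := key (φ.symm ⟨f, hf⟩)
    rw [φ.apply_symm_apply] at this
    rw [show f = _ from this]
    exact (ψ _).2
  · intro hf
    have := key (ψ.symm ⟨f, hf⟩)
    rw [ψ.apply_symm_apply] at this
    rw [show f = _ from this.symm]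
    exact (φ _).2

theorem card_trans (p : PP) (b : ℤ) : Cardinal.continuum ≤
    Cardinal.mk {x : ℤ_[p.1] | ‖x - b‖ < 1 ∧ ∀ h : ℤ[X], h ≠ 0 → Polynomial.aeval x h ≠ 0} := by
  set S : Set ℤ_[p.1] := {x | ‖x - b‖ < 1 ∧ ∀ h : ℤ[X], h ≠ 0 → Polynomial.aeval x h ≠ 0} with hS
  have h1 : Cardinal.continuum ≤ Cardinal.mk (Metric.ball (b : ℚ_[p.1]) 1) :=
    continuum_le_cardinal_of_isOpen ℚ_[p.1] Metric.isOpen_ball ⟨_, Metric.mem_ball_self one_pos⟩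
  set A : Set ℤ_[p.1] := {x | IsAlgebraic ℤ x} with hA
  have hAc : A.Countable := Algebraic.countable ℤ ℤ_[p.1]
  have hsub : Metric.ball (b : ℚ_[p.1]) 1 ⊆ (fun x : ℤ_[p.1] => (x : ℚ_[p.1])) '' (S ∪ A) := by
    intro y hy
    rw [Metric.mem_ball, dist_eq_norm] at hy
    have hy1 : ‖y‖ ≤ 1 := by
      have := Padic.nonarchimedean (p := p.1) (y - b) b
      rw [sub_add_cancel] at this
      exact this.trans (max_le hy.le (Padic.norm_int_le_one b))
    obtain ⟨z, rfl⟩ : ∃ z : ℤ_[p.1], (z : ℚ_[p.1]) = y := ⟨⟨y, hy1⟩, rfl⟩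
    refine ⟨z, ?_, rfl⟩
    by_cases ha : IsAlgebraic ℤ z
    · exact Or.inr ha
    · left
      refine ⟨?_, fun h hh e => ha ⟨h, hh, e⟩⟩
      rw [PadicInt.norm_def]
      exact_mod_cast hy
  have h2 : Cardinal.continuum ≤ Cardinal.mk S + Cardinal.aleph0 :=
    h1.trans <| (Cardinal.mk_le_mk_of_subset hsub).trans <| Cardinal.mk_image_le.trans <|
      (Cardinal.mk_union_le S A).trans <| by
        gcongr
        exact hAc.le_aleph0
  by_contra hlt
  rw [not_le] at hlt
  exact absurd (Cardinal.add_lt_of_lt Cardinal.aleph0_le_continuum hlt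
    Cardinal.aleph0_lt_continuum) (not_lt.2 h2)

theorem exists_good : ∃ τ : TT, Good τ := by
  have : Nonempty {h : ℤ[X] // h ≠ 0} := ⟨⟨1, one_ne_zero⟩⟩
  have : Countable ℤ[X] := by
    rw [← Cardinal.mk_le_aleph0_iff]
    exact (Polynomial.cardinalMk_le_max).trans (by simp)
  obtain ⟨e, he⟩ := exists_surjective_nat {h : ℤ[X] // h ≠ 0}
  have hp : ∀ p : PP, ∃ x : ℤ_[p.1], (∀ h : ℤ[X], h ≠ 0 → Polynomial.aeval x h ≠ 0) ∧
      ∀ m ≤ p.1, (∃ b : ℤ, ∀ j < m, ¬ (p.1 : ℤ) ∣ (e j).1.eval b) →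
        ∀ j < m, IsUnit (Polynomial.aeval x (e j).1) := by
    intro p
    classical
    set Q : ℕ → Prop := fun m => ∃ b : ℤ, ∀ j < m, ¬ (p.1 : ℤ) ∣ (e j).1.eval b with hQ
    have h0 : Q 0 := ⟨0, by simp⟩
    obtain ⟨b, hb⟩ : Q (Nat.findGreatest Q p.1) := Nat.findGreatest_spec (Nat.zero_le _) h0
    have hne : {x : ℤ_[p.1] | ‖x - b‖ < 1 ∧
        ∀ h : ℤ[X], h ≠ 0 → Polynomial.aeval x h ≠ 0}.Nonempty := by
      rw [Set.nonempty_iff_ne_empty]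
      intro hem
      have := card_trans p b
      rw [hem] at this
      simp [Cardinal.continuum_ne_zero] at this
    obtain ⟨x, hxb, hx⟩ := hne
    refine ⟨x, hx, fun m hm hQm j hj => ?_⟩
    have hj' := hb j (hj.trans_le (Nat.le_findGreatest hm hQm))
    by_contra hu
    apply hj'
    have h1 : (p.1 : ℤ_[p.1]) ∣ Polynomial.aeval x (e j).1 := by
      rw [← PadicInt.norm_lt_one_iff_dvd]
      exact PadicInt.not_isUnit_iff.1 hu
    have h2 : (p.1 : ℤ_[p.1]) ∣ Polynomial.aeval x (e j).1 -
        Polynomial.aeval (b : ℤ_[p.1]) (e j).1 := by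
      refine dvd_trans ((PadicInt.norm_lt_one_iff_dvd _).1 hxb) ?_
      rw [Polynomial.aeval_def, Polynomial.aeval_def, Polynomial.eval₂_eq_eval_map,
        Polynomial.eval₂_eq_eval_map]
      exact Polynomial.sub_dvd_eval_sub _ _ _
    have h3 := (dvd_sub_right h1).1 h2
    have h4 : Polynomial.aeval (b : ℤ_[p.1]) (e j).1 = (((e j).1.eval b : ℤ) : ℤ_[p.1]) := by
      have := Polynomial.aeval_algebraMap_apply ℤ_[p.1] b (e j).1
      simpa using this
    rw [h4, ← PadicInt.norm_lt_one_iff_dvd, PadicInt.norm_int_lt_one_iff_dvd] at h3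
    exact h3
  choose τ hτ1 hτ2 using hp
  refine ⟨τ, fun h hh => ⟨fun p => hτ1 p h hh, ?_⟩⟩
  obtain ⟨j, hj⟩ := he ⟨h, hh⟩
  set H : ℤ[X] := ∏ i ∈ Finset.range (j + 1), (e i).1 with hH
  have hH0 : H ≠ 0 := Finset.prod_ne_zero_iff.2 fun i _ => (e i).2
  set B : ℕ := j + 1 + H.natDegree + H.leadingCoeff.natAbs with hB
  refine Set.Finite.subset (s := {p : PP | p.1 ≤ B}) ?_ ?_
  · exact Set.Finite.preimage Subtype.val_injective.injOn (Set.finite_Iic B)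
  intro p hpu
  by_contra hpB
  simp only [Set.mem_ofPred_eq, not_le] at hpB
  apply hpu
  have := hτ2 p (j + 1) (by omega) ?_ j (by omega)
  · rwa [hj] at this
  have hmap : H.map (Int.castRingHom (ZMod p.1)) ≠ 0 := by
    intro e0
    have h1 : (Int.castRingHom (ZMod p.1)) H.leadingCoeff = 0 := by
      rw [Polynomial.leadingCoeff, ← Polynomial.coeff_map, e0, Polynomial.coeff_zero]
    rw [eq_intCast, ZMod.intCast_zmod_eq_zero_iff_dvd] at h1
    have h2 := Int.natAbs_dvd_natAbs.2 h1
    have h3 := Nat.le_of_dvd (Int.natAbs_pos.2 (Polynomial.leadingCoeff_ne_zero.2 hH0)) h2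
    simp only [Int.natAbs_natCast] at h3
    omega
  obtain ⟨r, hr⟩ := Polynomial.exists_eval_ne_zero_of_natDegree_lt_card _ hmap (by
    rw [Cardinal.mk_fintype, ZMod.card]
    have := Polynomial.natDegree_map_le (f := Int.castRingHom (ZMod p.1)) (p := H)
    exact_mod_cast (by omega))
  obtain ⟨b, rfl⟩ := ZMod.intCast_surjective r
  refine ⟨b, fun i hi hdvd => hr ?_⟩
  have h5 : (p.1 : ℤ) ∣ H.eval b := by
    rw [hH, Polynomial.eval_prod]
    exact hdvd.trans (Finset.dvd_prod_of_mem _ (Finset.mem_range.2 hi))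
  have h6 := Polynomial.eval_intCast_map (Int.castRingHom (ZMod p.1)) H b
  rw [h6, eq_intCast, ZMod.intCast_zmod_eq_zero_iff_dvd]
  exact h5

theorem card_good : Cardinal.continuum ≤ Cardinal.mk {τ : TT // Good τ} := by
  classical
  obtain ⟨τ, hτ⟩ := exists_good
  let P : PP := ⟨2, Nat.prime_two⟩
  refine (card_trans P 0).trans ?_
  refine Cardinal.mk_le_of_injective (f := fun x => ⟨Function.update τ P x.1, ?_⟩) ?_
  · intro h hh
    refine ⟨fun p => ?_, ?_⟩
    · by_cases hp : p = P
      · subst hp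
        rw [Function.update_self]
        exact x.2.2 h hh
      · rw [Function.update_of_ne hp]
        exact (hτ h hh).1 p
    · refine ((hτ h hh).2.insert P).subset ?_
      intro p hp
      by_cases hpP : p = P
      · exact Or.inl hpP
      · right
        simp only [Set.mem_ofPred_eq] at hp ⊢
        rwa [Function.update_of_ne hpP] at hp
  · intro x y hxy
    have := congrFun (congrArg Subtype.val hxy) P
    simp only [Function.update_self] at this
    exact Subtype.ext this

instance isoSetoid : Setoid {τ : TT // Good τ} where
  r τ σ := Nonempty (G τ.1 ≃+* G σ.1)
  iseqv := ⟨fun _ => ⟨RingEquiv.refl _⟩, fun ⟨e⟩ => ⟨e.symm⟩, fun ⟨e⟩ ⟨f⟩ => ⟨e.trans f⟩⟩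

theorem countable_polyQ : Countable ℚ[X] := by
  rw [← Cardinal.mk_le_aleph0_iff]
  exact (Polynomial.cardinalMk_le_max).trans (by simp)

theorem card_quot : Cardinal.continuum ≤ Cardinal.mk (Quotient isoSetoid) := by
  have hfib : ∀ b : Quotient isoSetoid,
      Cardinal.mk ((Quotient.mk isoSetoid) ⁻¹' {b}) ≤ Cardinal.aleph0 := by
    intro b
    obtain ⟨τ, rfl⟩ := Quotient.exists_rep b
    have hx : (X : ℚ[X]) ∈ G τ.1 := by simpa using int_mem_G τ.1 X
    have hiso : ∀ σ : (Quotient.mk isoSetoid) ⁻¹' {Quotient.mk isoSetoid τ},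
        Nonempty (G τ.1 ≃+* G σ.1.1) := fun σ => Quotient.exact (s := isoSetoid) (σ.2 : _ = _).symm
    let φ := fun σ => (hiso σ).some
    have := countable_polyQ
    rw [Cardinal.mk_le_aleph0_iff]
    refine Function.Injective.countable (β := ℚ[X])
      (f := fun σ => ((φ σ ⟨X, hx⟩ : G σ.1.1) : ℚ[X])) ?_
    intro σ σ' h
    exact Subtype.ext (Subtype.ext (iso_det _ _ _ (φ σ) (φ σ') ⟨X, hx⟩ rfl h))
  have h1 := card_good.trans (Cardinal.mk_le_mk_mul_of_mk_preimage_le _ hfib)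
  by_contra hlt
  rw [not_le] at hlt
  exact absurd (Cardinal.mul_lt_of_lt Cardinal.aleph0_le_continuum hlt
    Cardinal.aleph0_lt_continuum) (not_lt.2 h1)

theorem card_TT : Cardinal.mk TT ≤ Cardinal.continuum := by
  have := countable_polyQ
  have h1 : Cardinal.mk TT ≤ Cardinal.mk (Set ℚ[X]) :=
    Cardinal.mk_le_of_injective (f := fun τ => (G τ : Set ℚ[X]))
      (SetLike.coe_injective.comp G_injective)
  refine h1.trans ?_
  rw [Cardinal.mk_set, ← Cardinal.two_power_aleph0]
  exact Cardinal.power_le_power_left two_ne_zero (Cardinal.mk_le_aleph0_iff.2 inferInstance)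

/-- There are `2^ℵ₀` parameters `τ` for which `R_τ` is a PID, and among the corresponding
rings there are `2^ℵ₀` pairwise non-isomorphic ones. -/
theorem stmt_10 :
    ∃ F : (∀ p : {p : ℕ // p.Prime}, @PadicInt p.1 ⟨p.2⟩) → Subring (Polynomial ℚ),
      (∀ τ, (F τ : Set (Polynomial ℚ)) = RtauSet τ) ∧
      ∃ T : Set (∀ p : {p : ℕ // p.Prime}, @PadicInt p.1 ⟨p.2⟩),
        Cardinal.mk T = 2 ^ Cardinal.aleph0 ∧
        (∀ τ ∈ T, IsPrincipalIdealRing (F τ)) ∧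
        (∀ τ ∈ T, ∀ σ ∈ T, τ ≠ σ → IsEmpty (F τ ≃+* F σ)) := by
  refine ⟨G, G_eq, Set.range (fun q : Quotient isoSetoid => q.out.1), ?_, ?_, ?_⟩
  · rw [Cardinal.two_power_aleph0]
    apply le_antisymm
    · exact (Cardinal.mk_set_le _).trans card_TT
    · rw [Cardinal.mk_range_eq]
      · exact card_quot
      · intro a b h
        have := congrArg (Quotient.mk isoSetoid) (Subtype.ext h)
        simpa using this
  · rintro _ ⟨q, rfl⟩
    exact pid _ q.out.2
  · rintro _ ⟨a, rfl⟩ _ ⟨b, rfl⟩ hne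
    refine ⟨fun e => hne ?_⟩
    have : Quotient.mk isoSetoid a.out = Quotient.mk isoSetoid b.out :=
      Quotient.sound (s := isoSetoid) ⟨e⟩
    rw [Quotient.out_eq, Quotient.out_eq] at this
    rw [this]
end

section
/- Let k be a positive integer and let b ∈ R_τ with b > 0 and deg(b) ≥ 1. Then there exists a ∈ R_τ with a > 0 such that every division chain of length l ≤ k starting from (a,b) in R_τ has last remainder r_l with deg(r_l) ≥ deg(b). -/
open Polynomial

/-- A division chain of length `k` starting from `(a, b)`: `s 0 = a`, `s 1 = b`
(i.e. `r₋₁ = a`, `r₀ = b`), `q i` is the quotient `q_{i+1}`, `s (i+2)` is the remainder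
`r_{i+1}`, and `r_{i-1} = q_{i+1} r_i + r_{i+1}` for all `i < k`. The last remainder
`r_k` is `s (k+1)`. -/
def DivChain {R : Type*} [CommRing R] (a b : R) (k : ℕ) (q s : ℕ → R) : Prop :=
  s 0 = a ∧ s 1 = b ∧ ∀ i < k, s i = q i * s (i + 1) + s (i + 2)


/-- Continued fraction length at most `k`. -/
def Lle : ℕ → ℚ → Prop
  | 0, x => Int.fract x = 0
  | k + 1, x => Lle k (Int.fract x)⁻¹

theorem Lle_of_fract_zero (k : ℕ) (x : ℚ) (h : Int.fract x = 0) : Lle k x := by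
  induction k generalizing x with
  | zero => exact h
  | succ k ih => exact ih _ (by simp [h])

theorem Lle_succ (k : ℕ) (x : ℚ) (h : Lle k x) : Lle (k + 1) x := by
  induction k generalizing x with
  | zero => exact Lle_of_fract_zero _ _ h
  | succ k ih => exact ih _ h

theorem Lle_mono {k m : ℕ} (hkm : k ≤ m) {x : ℚ} (h : Lle k x) : Lle m x := by
  induction hkm with
  | refl => exact h
  | step _ ih => exact Lle_succ _ _ ih

theorem Lle_congr (k : ℕ) (x y : ℚ) (hxy : Int.fract x = Int.fract y) (h : Lle k x) : Lle k y := by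
  cases k with
  | zero => simpa [Lle, ← hxy] using h
  | succ k => simpa [Lle, ← hxy] using h

theorem fract_eq_aux (x y : ℚ) (n : ℤ) (h0 : 0 ≤ y) (h1 : y < 1) (h : x = y + n) :
    Int.fract x = y := by
  rw [h, Int.fract_add_intCast, Int.fract_eq_self.2 ⟨h0, h1⟩]

theorem Lle_neg (k : ℕ) (x : ℚ) (h : Lle k x) : Lle (k + 1) (-x) := by
  by_cases hf : Int.fract x = 0
  · exact Lle_of_fract_zero _ _ (by rw [Int.fract_neg_eq_zero]; exact hf)
  have hneg := Int.fract_neg hf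
  have h0 : 0 < Int.fract x := lt_of_le_of_ne (Int.fract_nonneg x) (Ne.symm hf)
  have h1 : Int.fract x < 1 := Int.fract_lt_one x
  rcases k with _ | k
  · exact absurd h hf
  change Lle k (Int.fract x)⁻¹ at h
  change Lle (k + 1) (Int.fract (-x))⁻¹
  rw [hneg]
  generalize Int.fract x = f at *
  have h1' : 0 < 1 - f := by linarith
  rcases lt_trichotomy f (1 / 2) with hlt | heq | hgt
  · have e : Int.fract (1 - f)⁻¹ = f / (1 - f) := by
      apply fract_eq_aux _ _ 1 (by positivity)
      · rw [div_lt_one h1']; linarith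
      · push_cast; field_simp; ring
    change Lle k (Int.fract (1 - f)⁻¹)⁻¹
    rw [e]
    refine Lle_congr k _ _ ?_ h
    rw [Int.fract_eq_fract]
    exact ⟨1, by push_cast; field_simp; ring⟩
  · subst heq
    apply Lle_succ
    norm_num at h ⊢
    exact h
  · have e : Int.fract f⁻¹ = (1 - f) / f := by
      apply fract_eq_aux _ _ 1 (by positivity)
      · rw [div_lt_one h0]; linarith
      · push_cast; field_simp; ring
    rcases k with _ | k
    · change Int.fract f⁻¹ = 0 at h
      rw [e] at h
      have : 0 < (1 - f) / f := by positivity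
      linarith
    · change Lle k (Int.fract f⁻¹)⁻¹ at h
      rw [e] at h
      apply Lle_succ
      apply Lle_succ
      refine Lle_congr k _ _ ?_ h
      rw [Int.fract_eq_fract]
      exact ⟨-1, by push_cast; field_simp; ring⟩

theorem Lle_inv_pos (k : ℕ) (x : ℚ) (hx : 0 < x) (h : Lle k x) : Lle (k + 1) x⁻¹ := by
  rcases lt_trichotomy x 1 with hlt | heq | hgt
  · have e : Int.fract x = x := Int.fract_eq_self.2 ⟨hx.le, hlt⟩
    rcases k with _ | k
    · change Int.fract x = 0 at h
      linarith
    · change Lle k (Int.fract x)⁻¹ at h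
      rw [e] at h
      exact Lle_succ _ _ (Lle_succ _ _ h)
  · subst heq
    exact Lle_of_fract_zero _ _ (by simp)
  · have e : Int.fract x⁻¹ = x⁻¹ := Int.fract_eq_self.2 ⟨by positivity, inv_lt_one_of_one_lt₀ hgt⟩
    change Lle k (Int.fract x⁻¹)⁻¹
    rwa [e, inv_inv]

theorem Lle_inv (k : ℕ) (x : ℚ) (h : Lle k x) : Lle (k + 3) x⁻¹ := by
  rcases lt_trichotomy x 0 with hlt | heq | hgt
  · have := Lle_neg _ _ (Lle_inv_pos _ _ (by linarith) (Lle_neg _ _ h))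
    rwa [inv_neg, neg_neg] at this
  · subst heq
    exact Lle_of_fract_zero _ _ (by simp)
  · exact Lle_mono (by omega) (Lle_inv_pos _ _ hgt h)

theorem exists_not_Lle (N : ℕ) : ∃ x : ℚ, 1 < x ∧ ¬ Lle N x := by
  induction N with
  | zero =>
    refine ⟨3 / 2, by norm_num, ?_⟩
    change ¬ Int.fract (3 / 2 : ℚ) = 0
    rw [fract_eq_aux (3 / 2) (1 / 2) 1 (by norm_num) (by norm_num) (by norm_num)]
    norm_num
  | succ N ih =>
    obtain ⟨x, hx, h⟩ := ih
    have hx0 : 0 < x := by linarith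
    have : 0 < x⁻¹ := by positivity
    refine ⟨x⁻¹ + 1, by linarith, ?_⟩
    change ¬ Lle N (Int.fract (x⁻¹ + 1))⁻¹
    rw [fract_eq_aux (x⁻¹ + 1) x⁻¹ 1 this.le (inv_lt_one_of_one_lt₀ hx) (by simp), inv_inv]
    exact h

theorem first_return (R : Subring ℚ[X])
    (hR : ∀ f ∈ R, f.degree ≤ 0 → ∃ n : ℤ, f = (n : ℚ[X])) :
    ∀ l : ℕ, ∀ q s : ℕ → ℚ[X], (∀ i, q i ∈ R) →
      (∀ i < l, s i = q i * s (i + 1) + s (i + 2)) → 1 ≤ l →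
      (s 0).degree ≤ (s 1).degree → (∀ i < l, (s 1).degree ≤ (s (i + 1)).degree) →
      (s (l + 1)).degree < (s 1).degree →
      ∃ A B C D : ℤ, ∃ g ∈ R, (A * D - B * C = 1 ∨ A * D - B * C = -1) ∧
        s 0 = A * (s l + g * s (l + 1)) + B * s (l + 1) ∧
        s 1 = C * (s l + g * s (l + 1)) + D * s (l + 1) ∧
        Lle (3 * l) ((A : ℚ) / C) := by
  intro l
  induction l using Nat.strong_induction_on with
  | _ l ih =>
  intro q s hq hs hl h01 hge hlt
  have hs0 := hs 0 (by omega)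
  simp only [zero_add] at hs0
  have hs1 : s 1 ≠ 0 := by
    intro h; rw [h] at hlt; simp at hlt
  by_cases h2 : (s 2).degree ≤ (s 1).degree
  · obtain ⟨n, hn⟩ : ∃ n : ℤ, q 0 = (n : ℚ[X]) := by
      apply hR _ (hq 0)
      have e : q 0 * s 1 = s 0 - s 2 := by rw [hs0]; ring
      have hd : (q 0 * s 1).degree ≤ (s 1).degree := by
        rw [e]; exact (degree_sub_le _ _).trans (max_le h01 h2)
      by_contra hc
      push Not at hc
      rw [degree_mul, degree_eq_natDegree hs1] at hd
      have hq0 : q 0 ≠ 0 := by rintro h; rw [h] at hc; simp at hc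
      rw [degree_eq_natDegree hq0] at hd hc
      norm_cast at hd hc
      omega
    rcases Nat.eq_or_lt_of_le hl with h1 | h1
    · subst h1
      refine ⟨n, 1, 1, 0, 0, R.zero_mem, by simp, ?_, by simp, ?_⟩
      · rw [hs0, hn]; push_cast; ring
      · exact Lle_of_fract_zero _ _ (by simp)
    · obtain ⟨m, rfl⟩ : ∃ m, l = m + 1 := ⟨l - 1, by omega⟩
      have h21 : (s 2).degree = (s 1).degree := le_antisymm h2 (hge 1 h1)
      obtain ⟨A, B, C, D, g, hg, hdet, e1, e2, hL⟩ := ih m (by omega) (fun i => q (i + 1))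
        (fun i => s (i + 1)) (fun i => hq _) (fun i hi => hs (i + 1) (by omega)) (by omega)
        (by simpa using h21.ge)
        (fun i hi => by simpa [h21] using hge (i + 1) (by omega)) (by simpa [h21] using hlt)
      simp only [zero_add, Nat.reduceAdd] at e1 e2
      refine ⟨n * A + C, n * B + D, A, B, g, hg, ?_, ?_, e1, ?_⟩
      · have : (n * A + C) * B - (n * B + D) * A = -(A * D - B * C) := by ring
        rw [this]
        rcases hdet with h | h <;> simp [h]
      · rw [hs0, hn, e1, e2]; push_cast; ring
      · by_cases hA : A = 0
        · subst hA
          exact Lle_of_fract_zero _ _ (by simp)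
        · have hA' : (A : ℚ) ≠ 0 := by exact_mod_cast hA
          refine Lle_congr _ _ _ ?_ (Lle_inv _ _ hL)
          rw [Int.fract_eq_fract]
          exact ⟨-n, by rw [inv_div]; push_cast; field_simp; ring⟩
  · push Not at h2
    classical
    have hl2 : 2 ≤ l := by
      rcases Nat.eq_or_lt_of_le hl with h1 | h1
      · subst h1
        exact absurd (hlt.trans h2) (lt_irrefl _)
      · exact h1
    have hex : ∃ m, (s (m + 2)).degree < (s 2).degree :=
      ⟨l - 1, by rw [show l - 1 + 2 = l + 1 by omega]; exact hlt.trans h2⟩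
    obtain ⟨m, hm, hmin⟩ : ∃ m, (s (m + 2)).degree < (s 2).degree ∧
        ∀ i < m, ¬ (s (i + 2)).degree < (s 2).degree :=
      ⟨Nat.find hex, Nat.find_spec hex, fun i hi => Nat.find_min hex hi⟩
    have hm1 : 1 ≤ m := by
      by_contra hc
      obtain rfl : m = 0 := by omega
      exact lt_irrefl _ hm
    have hml : m ≤ l - 1 := by
      by_contra hc
      apply hmin (l - 1) (by omega)
      rw [show l - 1 + 2 = l + 1 by omega]; exact hlt.trans h2
    obtain ⟨A, B, C, D, g, hg, hdet, e1, e2, -⟩ := ih m (by omega) (fun i => q (i + 1))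
      (fun i => s (i + 1)) (fun i => hq _) (fun i hi => hs (i + 1) (by omega)) hm1
      (by simpa using h2.le)
      (fun i hi => by simpa using hmin i hi) (by simpa using hm)
    simp only [zero_add, Nat.reduceAdd, add_assoc] at e1 e2
    have hdegint : ∀ (n : ℤ) (f : ℚ[X]), ((n : ℚ[X]) * f).degree ≤ f.degree := by
      intro n f
      rw [← zsmul_eq_mul]
      exact degree_smul_le _ _
    have hdegint' : ∀ (n : ℤ) (f : ℚ[X]), n ≠ 0 → ((n : ℚ[X]) * f).degree = f.degree := by
      intro n f hn
      rw [show (n : ℚ[X]) = Polynomial.C (n : ℚ) by simp, degree_C_mul (by exact_mod_cast hn)]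
    have hS : (s 2).degree ≤ (s (m + 1) + g * s (m + 2)).degree := by
      by_contra hc
      push Not at hc
      have := degree_add_le ((C : ℚ[X]) * (s (m + 1) + g * s (m + 2))) ((D : ℚ[X]) * s (m + 2))
      rw [← e2] at this
      have h3 := this.trans (max_le_max (hdegint _ _) (hdegint _ _))
      exact absurd (h3.trans_lt (max_lt hc hm)) (lt_irrefl _)
    have hA : A = 0 := by
      by_contra hA
      have e3 : (A : ℚ[X]) * (s (m + 1) + g * s (m + 2)) = s 1 - B * s (m + 2) := by
        rw [e1]; ring
      have h3 := degree_sub_le (s 1) ((B : ℚ[X]) * s (m + 2))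
      rw [← e3, hdegint' _ _ hA] at h3
      have h4 := h3.trans (max_le_max le_rfl (hdegint _ _))
      exact absurd ((hS.trans h4).trans_lt (max_lt h2 hm)) (lt_irrefl _)
    subst hA
    have hBC : IsUnit B ∧ IsUnit C := by
      have : IsUnit (B * C) := by
        rw [Int.isUnit_iff]
        rcases hdet with h | h
        · right; linarith
        · left; linarith
      exact ⟨isUnit_of_mul_isUnit_left this, isUnit_of_mul_isUnit_right this⟩
    obtain ⟨hB, hC⟩ := hBC
    have hBB : B * B = 1 := Int.isUnit_mul_self hB
    have hCC : C * C = 1 := Int.isUnit_mul_self hC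
    have hBB' : (B : ℚ[X]) * B = 1 := by exact_mod_cast hBB
    have hCC' : (C : ℚ[X]) * C = 1 := by exact_mod_cast hCC
    simp only [Int.cast_zero, zero_mul, zero_add] at e1
    have hdeg1 : (s 1).degree = (s (m + 2)).degree := by rw [e1, hdegint' _ _ hB.ne_zero]
    have hml' : m + 1 < l := by
      by_contra hc
      have : l = m + 1 := by omega
      subst this
      rw [hdeg1] at hlt
      exact lt_irrefl _ hlt
    obtain ⟨t, rfl⟩ : ∃ t, l = m + 1 + (t + 1) := ⟨l - (m + 1) - 1, by omega⟩
    have e4 := hs (m + 1) (by omega)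
    simp only [add_assoc, Nat.reduceAdd] at e4
    obtain ⟨A', B', C', D', g', hg', hdet', e1', e2', hL⟩ := ih (t + 1) (by omega)
      (fun i => if i = 0 then C * B * q 0 + q (m + 1) + g + C * D else q (m + 1 + i))
      (fun i => if i = 0 then C * s 0 else s (m + 1 + i))
      (by
        intro i
        split_ifs
        · exact R.add_mem (R.add_mem (R.add_mem (R.mul_mem (R.mul_mem (intCast_mem R _)
            (intCast_mem R _)) (hq _)) (hq _)) hg) (R.mul_mem (intCast_mem R _)
            (intCast_mem R _))
        · exact hq _)
      (by
        intro i hi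
        rcases i with _ | i
        · simp only [if_true, zero_add, one_ne_zero, if_false, OfNat.ofNat_ne_zero, add_assoc,
            Nat.reduceAdd]
          rw [hs0, e2, e4, e1]
          linear_combination (q (m + 1) * s (m + 2) + s (m + 3) + g * s (m + 2)) * hCC'
        · simpa [add_assoc] using hs (m + 1 + (i + 1)) (by omega))
      (by omega)
      (by
        simp only [if_true, one_ne_zero, if_false, add_assoc, Nat.reduceAdd]
        rw [hdegint' _ _ hC.ne_zero, ← hdeg1]; exact h01)
      (by
        intro i hi
        simp only [one_ne_zero, if_false, add_assoc, Nat.reduceAdd, Nat.add_eq_zero_iff, and_false]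
        rw [← hdeg1]
        have := hge (m + 1 + i) (by omega)
        rwa [show m + 1 + i + 1 = m + (1 + (i + 1)) by ring] at this)
      (by
        simp only [one_ne_zero, if_false, add_assoc, Nat.reduceAdd, Nat.add_eq_zero_iff, and_false,
          OfNat.ofNat_ne_zero]
        rw [← hdeg1, show m + (1 + (t + 2)) = m + 1 + (t + 1) + 1 by ring]
        exact hlt)
    simp only [if_true, one_ne_zero, if_false, Nat.add_eq_zero_iff, and_false, OfNat.ofNat_ne_zero] at e1' e2'
    rw [show m + 1 + (t + 1 + 1) = m + 1 + (t + 1) + 1 by ring] at e1' e2'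
    refine ⟨C * A', C * B', B * C', B * D', g', hg', ?_, ?_, ?_, ?_⟩
    · have e : C * A' * (B * D') - C * B' * (B * C') = (C * B) * (A' * D' - B' * C') := by ring
      rw [e]
      rcases Int.isUnit_iff.1 (hC.mul hB) with h | h <;> rcases hdet' with h' | h' <;>
        simp [h, h']
    · push_cast
      linear_combination (C : ℚ[X]) * e1' - s 0 * hCC'
    · push_cast
      rw [show m + 2 = m + 1 + 1 by ring] at e1
      linear_combination e1 + (B : ℚ[X]) * e2'
    · push_cast
      rcases Int.isUnit_iff.1 hC with h | h <;> rcases Int.isUnit_iff.1 hB with h' | h' <;>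
        simp only [h, h', Int.cast_one, Int.cast_neg, one_mul, neg_mul, neg_div,
          div_neg, neg_neg]
      · exact Lle_mono (by omega) hL
      · exact Lle_mono (by omega) (Lle_neg _ _ hL)
      · exact Lle_mono (by omega) (Lle_neg _ _ hL)
      · exact Lle_mono (by omega) hL

theorem Rtau_norm_iff (τ : ∀ p : {p : ℕ // p.Prime}, @PadicInt p.1 ⟨p.2⟩) (f : ℚ[X]) :
    f ∈ RtauSet τ ↔ ∀ p : {p : ℕ // p.Prime},
      letI : Fact p.1.Prime := ⟨p.2⟩
      ‖Polynomial.aeval ((τ p : @PadicInt p.1 ⟨p.2⟩) : ℚ_[p.1]) f‖ ≤ 1 := by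
  have key : ∀ (h : ℤ[X]) (n : ℕ), n ≠ 0 → Polynomial.C (n : ℚ) * f = h.map (algebraMap ℤ ℚ) →
      ∀ p : {p : ℕ // p.Prime},
      letI : Fact p.1.Prime := ⟨p.2⟩
      (((p.1 : @PadicInt p.1 ⟨p.2⟩) ^ (n.factorization p.1)) ∣ Polynomial.aeval (τ p) h ↔
      ‖Polynomial.aeval ((τ p : @PadicInt p.1 ⟨p.2⟩) : ℚ_[p.1]) f‖ ≤ 1) := by
    intro h n hn hf p
    have : Fact p.1.Prime := ⟨p.2⟩
    have e := congrArg (Polynomial.aeval ((τ p : ℤ_[p.1]) : ℚ_[p.1])) hf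
    rw [map_mul, aeval_C, aeval_map_algebraMap] at e
    have e2 : Polynomial.aeval ((τ p : ℤ_[p.1]) : ℚ_[p.1]) h
        = ((Polynomial.aeval (τ p) h : ℤ_[p.1]) : ℚ_[p.1]) := by
      have := Polynomial.aeval_algebraMap_apply ℚ_[p.1] (τ p) h
      exact this
    rw [e2] at e
    have e3 := congrArg norm e
    rw [norm_mul, map_natCast, ← PadicInt.norm_def] at e3
    have hnn : ‖(n : ℚ_[p.1])‖ = (p.1 : ℝ) ^ (-(n.factorization p.1 : ℕ) : ℤ) := by
      rw [Padic.norm_eq_zpow_neg_valuation (by exact_mod_cast hn), Padic.valuation_natCast,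
        Nat.factorization_def _ p.2]
    rw [← Ideal.mem_span_singleton, ← PadicInt.norm_le_pow_iff_mem_span_pow, ← e3, ← hnn]
    have hpos : 0 < ‖(n : ℚ_[p.1])‖ := norm_pos_iff.2 (by exact_mod_cast hn)
    exact mul_le_iff_le_one_right hpos
  constructor
  · rintro ⟨h, n, hn, hf, hd⟩ p
    exact (key h n hn hf p).1 (hd p)
  · intro H
    obtain ⟨b, hb0, hb⟩ := IsLocalization.integerNormalization_spec (nonZeroDivisors ℤ) f
    have hb0' : b ≠ 0 := nonZeroDivisors.ne_zero hb0
    obtain ⟨h, n, hn, hf⟩ : ∃ (h : ℤ[X]) (n : ℕ), n ≠ 0 ∧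
        Polynomial.C (n : ℚ) * f = h.map (algebraMap ℤ ℚ) := by
      refine ⟨C (b.sign) * IsLocalization.integerNormalization (nonZeroDivisors ℤ) f, b.natAbs,
        by simpa using hb0', ?_⟩
      ext i
      have hi := congrArg (fun g => Polynomial.coeff g i) hb
      simp only [coeff_map, coeff_smul, coeff_C_mul] at hi ⊢
      rw [map_mul, hi, zsmul_eq_mul, ← mul_assoc]
      congr 1
      rw [eq_intCast, ← Int.cast_mul, Int.sign_mul_self_eq_natAbs]
      simp
    exact ⟨h, n, hn, hf, fun p => (key h n hn hf p).2 (H p)⟩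

/-- `R_τ` as a subring. -/
def RtauRing (τ : ∀ p : {p : ℕ // p.Prime}, @PadicInt p.1 ⟨p.2⟩) : Subring ℚ[X] where
  carrier := RtauSet τ
  mul_mem' := by
    intro a b ha hb
    rw [Rtau_norm_iff] at *
    intro p
    have : Fact p.1.Prime := ⟨p.2⟩
    rw [map_mul, norm_mul]
    exact mul_le_one₀ (ha p) (norm_nonneg _) (hb p)
  add_mem' := by
    intro a b ha hb
    rw [Rtau_norm_iff] at *
    intro p
    have : Fact p.1.Prime := ⟨p.2⟩
    rw [map_add]
    exact (Padic.nonarchimedean _ _).trans (max_le (ha p) (hb p))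
  one_mem' := by
    rw [Rtau_norm_iff]
    intro p
    simp
  zero_mem' := by
    rw [Rtau_norm_iff]
    intro p
    simp
  neg_mem' := by
    intro a ha
    rw [Rtau_norm_iff] at *
    intro p
    have : Fact p.1.Prime := ⟨p.2⟩
    rw [map_neg, norm_neg]
    exact ha p

theorem Rtau_const (τ : ∀ p : {p : ℕ // p.Prime}, @PadicInt p.1 ⟨p.2⟩) :
    ∀ f ∈ RtauRing τ, f.degree ≤ 0 → ∃ n : ℤ, f = (n : ℚ[X]) := by
  intro f hf hd
  have hf' := (Rtau_norm_iff τ f).1 hf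
  rw [eq_C_of_degree_le_zero hd] at hf' ⊢
  generalize f.coeff 0 = c at *
  have hden : c.den = 1 := by
    by_contra hc
    obtain ⟨p, hp, hpd⟩ := Nat.exists_prime_and_dvd hc
    have : Fact p.Prime := ⟨hp⟩
    have := hf' ⟨p, hp⟩
    rw [aeval_C, eq_ratCast, Padic.norm_rat_le_one_iff_padicValuation_le_one,
      Rat.padicValuation_le_one_iff] at this
    exact this hpd
  refine ⟨c.num, ?_⟩
  conv_lhs => rw [← Rat.coe_int_num_of_den_eq_one hden]
  simp

theorem Rtau_div (τ : ∀ p : {p : ℕ // p.Prime}, @PadicInt p.1 ⟨p.2⟩) (v : ℕ) (hv : v ≠ 0) :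
    ∀ f ∈ RtauRing τ, ∃ c : ℤ, ∃ g ∈ RtauRing τ, f = c + v * g := by
  induction v using induction_on_primes with
  | zero => exact absurd rfl hv
  | one => exact fun f hf => ⟨0, f, hf, by simp⟩
  | prime_mul p v hp ih =>
    intro f hf
    have hp' := (Nat.prime_iff.2 hp.prime)
    obtain ⟨c, g, hg, hfg⟩ : ∃ c : ℤ, ∃ g ∈ RtauRing τ, f = c + p * g := by
      have : Fact p.Prime := ⟨hp'⟩
      have hn := (Rtau_norm_iff τ f).1 hf
      let z : ℤ_[p] := ⟨_, hn ⟨p, hp'⟩⟩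
      obtain ⟨c, -, hc⟩ := PadicInt.exists_mem_range z
      have hp0 : (p : ℚ) ≠ 0 := by exact_mod_cast hp'.ne_zero
      have hfe : f = ((c : ℤ) : ℚ[X]) + p * (Polynomial.C (p : ℚ)⁻¹ * (f - ((c : ℤ) : ℚ[X]))) := by
        rw [← mul_assoc, show (p : ℚ[X]) = Polynomial.C (p : ℚ) by simp, ← C_mul,
          mul_inv_cancel₀ hp0]
        simp
      refine ⟨c, _, ?_, hfe⟩
      refine (Rtau_norm_iff τ _).2 ?_
      rintro ⟨r, hr⟩
      have : Fact r.Prime := ⟨hr⟩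
      have hsub := (Rtau_norm_iff τ _).1
        ((RtauRing τ).sub_mem hf (intCast_mem (RtauRing τ) (c : ℤ))) ⟨r, hr⟩
      dsimp only at hsub ⊢
      rw [map_mul, norm_mul, aeval_C]
      by_cases hrp : r = p
      · subst hrp
        rw [map_inv₀, map_natCast, norm_inv, Padic.norm_p, inv_inv]
        have h1 : ‖z - c‖ < 1 := by
          rw [PadicInt.norm_lt_one_iff_dvd]
          rw [PadicInt.maximalIdeal_eq_span_p, Ideal.mem_span_singleton] at hc
          exact hc
        have h2 : ‖z - c‖ ≤ (r : ℝ) ^ (-(1 : ℕ) : ℤ) := by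
          rw [PadicInt.norm_le_pow_iff_norm_lt_pow_add_one]
          simpa using h1
        have h3 : ‖aeval ((τ ⟨r, hr⟩ : ℤ_[r]) : ℚ_[r]) (f - ((c : ℤ) : ℚ[X]))‖ = ‖z - c‖ := by
          rw [PadicInt.norm_def, map_sub]
          congr 1
          push_cast
          simp [z]
        rw [h3]
        have hr0 : (0 : ℝ) < r := by exact_mod_cast hr.pos
        calc (r : ℝ) * ‖z - c‖ ≤ r * (r : ℝ) ^ (-(1 : ℕ) : ℤ) := by gcongr
          _ = 1 := by simp [hr0.ne.symm]
      · have : ‖(p : ℚ_[r])‖ = 1 := by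
          rw [Padic.norm_natCast_eq_one_iff]
          exact (Nat.coprime_primes hr hp').2 hrp
        rw [map_inv₀, map_natCast, norm_inv, this, inv_one, one_mul]
        exact hsub
    obtain ⟨c', g', hg', hgg⟩ := ih (by rintro rfl; simp at hv) g hg
    refine ⟨c + p * c', g', hg', ?_⟩
    rw [hfg, hgg]; push_cast; ring

/-- For every `k ≥ 1` and every `b > 0` in `R_τ` of degree at least `1`, there is `a > 0`
in `R_τ` such that every division chain of length `l ≤ k` in `R_τ` starting from `(a, b)`
has last remainder of degree at least `deg b`. Positivity is taken in the ordering of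
`R_τ` by sign of the leading coefficient. -/
theorem stmt_17 (τ : ∀ p : {p : ℕ // p.Prime}, @PadicInt p.1 ⟨p.2⟩)
    (k : ℕ) (hk : 1 ≤ k) (b : Polynomial ℚ) (hb : b ∈ RtauSet τ)
    (hbpos : 0 < b.leadingCoeff) (hbdeg : 1 ≤ b.degree) :
    ∃ a : Polynomial ℚ, a ∈ RtauSet τ ∧ 0 < a.leadingCoeff ∧
      ∀ l : ℕ, 1 ≤ l → l ≤ k → ∀ q s : ℕ → Polynomial ℚ,
        (∀ i, q i ∈ RtauSet τ) → (∀ i, s i ∈ RtauSet τ) →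
        DivChain a b l q s → b.degree ≤ (s (l + 1)).degree := by
  obtain ⟨x, hx, hxL⟩ := exists_not_Lle (3 * k)
  have hx0 : x ≠ 0 := by linarith
  have hb' : b ∈ RtauRing τ := hb
  obtain ⟨c, a, ha, hab⟩ := Rtau_div τ x.den x.den_nz ((x.num : ℚ[X]) * b)
    ((RtauRing τ).mul_mem (intCast_mem _ _) hb')
  have hden : (x.den : ℚ) ≠ 0 := by exact_mod_cast x.den_nz
  -- `a = x * b + constant`
  have hae : a = Polynomial.C x * b + Polynomial.C (-(c : ℚ) / x.den) := by
    have h1 : Polynomial.C (x.den : ℚ) * a = Polynomial.C (x.num : ℚ) * b - Polynomial.C (c : ℚ) := by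
      have : Polynomial.C (x.num : ℚ) * b = Polynomial.C (c : ℚ) + Polynomial.C (x.den : ℚ) * a := by
        simpa using hab
      rw [this]; ring
    have h2 : a = Polynomial.C (x.den : ℚ)⁻¹ * (Polynomial.C (x.den : ℚ) * a) := by
      rw [← mul_assoc, ← C_mul, inv_mul_cancel₀ hden]; simp
    rw [h2, h1, mul_sub, ← mul_assoc, ← C_mul, ← C_mul, sub_eq_add_neg, ← C_neg]
    congr 3
    · conv_rhs => rw [← Rat.num_div_den x]
      ring
    · ring
  have hbpos' : (0 : WithBot ℕ) < b.degree := lt_of_lt_of_le (by norm_num) hbdeg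
  have hdlt : (Polynomial.C (-(c : ℚ) / x.den)).degree < (Polynomial.C x * b).degree := by
    rw [degree_C_mul hx0]
    exact degree_C_le.trans_lt hbpos'
  have hadeg : a.degree = b.degree := by
    rw [hae, degree_add_eq_left_of_degree_lt hdlt, degree_C_mul hx0]
  have halc : a.leadingCoeff = x * b.leadingCoeff := by
    rw [hae, leadingCoeff_add_of_degree_lt' hdlt, leadingCoeff_mul, leadingCoeff_C]
  refine ⟨a, ha, ?_, ?_⟩
  · rw [halc]; exact mul_pos (by linarith) hbpos
  intro l hl hlk q s hq _ hch
  obtain ⟨h0, h1, hs⟩ := hch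
  by_contra hcon
  push Not at hcon
  classical
  have hex : ∃ m, (s (m + 1)).degree < b.degree := ⟨l, hcon⟩
  obtain ⟨m, hm, hmin⟩ : ∃ m, (s (m + 1)).degree < b.degree ∧
      ∀ i < m, ¬ (s (i + 1)).degree < b.degree :=
    ⟨Nat.find hex, Nat.find_spec hex, fun i hi => Nat.find_min hex hi⟩
  have hml : m ≤ l := by
    by_contra hc
    exact hmin l (by omega) hcon
  have hm1 : 1 ≤ m := by
    by_contra hc
    obtain rfl : m = 0 := by omega
    simp [h1] at hm
  obtain ⟨A, B, C, D, g, -, -, e0, e1, hL⟩ := first_return (RtauRing τ) (Rtau_const τ) m q s hq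
    (fun i hi => hs i (by omega)) hm1 (by rw [h0, h1, hadeg])
    (fun i hi => by rw [h1]; exact not_lt.1 (hmin i hi)) (by rw [h1]; exact hm)
  rw [h0] at e0
  rw [h1] at e1
  generalize s m + g * s (m + 1) = S at e0 e1
  have hco : (s (m + 1)).coeff b.natDegree = 0 :=
    coeff_eq_zero_of_degree_lt (hm.trans_le degree_le_natDegree)
  have hcast : ∀ (n : ℤ) (f : ℚ[X]) (i : ℕ), ((n : ℚ[X]) * f).coeff i = n * f.coeff i := by
    intro n f i
    rw [show (n : ℚ[X]) = Polynomial.C (n : ℚ) by simp, coeff_C_mul]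
  have f0 : x * b.leadingCoeff = A * S.coeff b.natDegree := by
    rw [← halc, leadingCoeff, natDegree_eq_of_degree_eq hadeg, e0, coeff_add, hcast, hcast,
      hco]
    ring
  have f1 : b.leadingCoeff = C * S.coeff b.natDegree := by
    have := congrArg (fun p => Polynomial.coeff p b.natDegree) e1
    simp only [coeff_add, hcast, hco] at this
    rw [leadingCoeff, this]; ring
  have hxe : x = (A : ℚ) / C := by
    generalize S.coeff b.natDegree = σ at f0 f1
    have hC : (C : ℚ) ≠ 0 := by
      intro h; rw [h] at f1; linarith
    have hσ : σ ≠ 0 := by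
      intro h; rw [h] at f1; linarith
    rw [eq_div_iff hC]
    apply mul_right_cancel₀ hσ
    rw [← f0, f1]; ring
  rw [← hxe] at hL
  exact hxL (Lle_mono (by omega) hL)
end

section
/- For every τ ∈ ∏_p ℤ_p and every positive integer k, the ring R_τ is not k-stage Euclidean: there is no norm N : R_τ → ℕ (with N(a) = 0 iff a = 0) such that for every (a,b) with b ≠ 0 there exists an l-stage division chain starting from (a,b), l ≤ k, whose last remainder r_l satisfies N(r_l) < N(b). -/
open Polynomial

/-- Lexicographic size of a rational polynomial: degree, then absolute leading coefficient. -/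
noncomputable def polySz (f : ℚ[X]) : WithBot ℕ ×ₗ ℚ := toLex (f.degree, |f.leadingCoeff|)

/-- `(a, b)` can be reduced in `l` division steps to a last remainder of degree `< D`. -/
def RedTo (S : Subring ℚ[X]) (D : ℕ) : ℕ → ℚ[X] → ℚ[X] → Prop
  | 0, _, b => b.degree < D
  | l + 1, a, b => ∃ q ∈ S, RedTo S D l b (a - q * b)

theorem redTo_neg (S : Subring ℚ[X]) (D l : ℕ) : ∀ a b : ℚ[X], RedTo S D l a b →
    RedTo S D l (-a) b ∧ RedTo S D l a (-b) := by
  induction l with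
  | zero => intro a b h; simpa [RedTo] using h
  | succ l ih =>
    rintro a b ⟨q, hq, h⟩
    refine ⟨⟨-q, S.neg_mem hq, ?_⟩, ⟨-q, S.neg_mem hq, ?_⟩⟩
    · have := (ih _ _ h).2
      convert this using 1; ring
    · have := (ih _ _ h).1
      convert this using 1; ring

theorem redTo_shift (S : Subring ℚ[X]) (D l : ℕ) (a b q : ℚ[X]) (hq : q ∈ S)
    (h : RedTo S D l a b) : RedTo S D l (a + q * b) b := by
  cases l with
  | zero => exact h
  | succ l =>
    obtain ⟨q', hq', h⟩ := h
    refine ⟨q' + q, S.add_mem hq' hq, ?_⟩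
    convert h using 1; ring

theorem polySz_degree_le {f g : ℚ[X]} (h : polySz f ≤ polySz g) : f.degree ≤ g.degree := by
  rw [polySz, polySz, Prod.Lex.toLex_le_toLex] at h
  rcases h with h | h
  · exact h.le
  · exact h.1.le

theorem polySz_coeff_le {f g : ℚ[X]} (h : polySz f ≤ polySz g) :
    |f.coeff g.natDegree| ≤ |g.leadingCoeff| := by
  rw [polySz, polySz, Prod.Lex.toLex_le_toLex] at h
  rcases h with h | h
  · have : f.coeff g.natDegree = 0 :=
      coeff_eq_zero_of_degree_lt (h.trans_le degree_le_natDegree)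
    simp [this]
  · have h2 : f.natDegree = g.natDegree := natDegree_eq_of_degree_eq h.1
    rw [← h2]; exact h.2

theorem polySz_coeff_lt {f g : ℚ[X]} (h : polySz f < polySz g) :
    |f.coeff g.natDegree| < |g.leadingCoeff| := by
  rw [polySz, polySz, Prod.Lex.toLex_lt_toLex] at h
  rcases h with h | h
  · have : f.coeff g.natDegree = 0 :=
      coeff_eq_zero_of_degree_lt (h.trans_le degree_le_natDegree)
    have hg : g ≠ 0 := by rintro rfl; simp at h
    simpa [this] using hg
  · have h2 : f.natDegree = g.natDegree := natDegree_eq_of_degree_eq h.1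
    rw [← h2]; exact h.2

/-- If `q * b` has degree at most that of `b ≠ 0` then `q` is an integer. -/
theorem quot_const (S : Subring ℚ[X]) (hC : ∀ c : ℚ, C c ∈ S → ∃ z : ℤ, c = z)
    (q b : ℚ[X]) (hq : q ∈ S) (hb : b ≠ 0) (h : (q * b).degree ≤ b.degree) :
    ∃ z : ℤ, q = C (z : ℚ) := by
  have h1 : q.degree ≤ 0 := by
    by_cases hq0 : q = 0
    · simp [hq0]
    · rw [degree_mul, degree_eq_natDegree hq0, degree_eq_natDegree hb] at h
      rw [degree_eq_natDegree hq0]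
      norm_cast at *
      omega
  rw [eq_C_of_degree_le_zero h1] at hq ⊢
  obtain ⟨z, hz⟩ := hC _ hq
  exact ⟨z, by rw [hz]⟩

theorem redTo_peak (S : Subring ℚ[X]) (hC : ∀ c : ℚ, C c ∈ S → ∃ z : ℤ, c = z) (D : ℕ) :
    ∀ (l : ℕ) (a b : ℚ[X]), polySz a < polySz b → (D : WithBot ℕ) ≤ a.degree → RedTo S D l a b →
      ∀ q0 ∈ S, ∃ l' ≤ l, RedTo S D l' (b + q0 * a) a := by
  intro l
  induction l using Nat.strong_induction_on with
  | _ l ih =>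
  intro a b hab hD hR q0 hq0
  have hdab := polySz_degree_le hab.le
  cases l with
  | zero => exact absurd hR (not_lt.mpr (hD.trans hdab))
  | succ l =>
    obtain ⟨q, hq, h⟩ := hR
    rcases lt_or_ge (polySz b) (polySz (a - q * b)) with hlt | hle
    · obtain ⟨l', hl', h'⟩ := ih l (Nat.lt_succ_self l) b _ hlt (hD.trans hdab) h q hq
      rw [sub_add_cancel] at h'
      obtain ⟨l'', hl'', h''⟩ := ih l' (by omega) a b hab hD h' q0 hq0
      exact ⟨l'', by omega, h''⟩
    · have hb : b ≠ 0 := by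
        rintro rfl
        have := hD.trans hdab
        simp at this
      have hdeg : (q * b).degree ≤ b.degree := by
        have : q * b = a - (a - q * b) := by ring
        rw [this]
        exact (degree_sub_le _ _).trans (max_le hdab (polySz_degree_le hle))
      obtain ⟨z, rfl⟩ := quot_const S hC q b hq hb hdeg
      have h1 := polySz_coeff_lt hab
      have h2 := polySz_coeff_le hle
      have hlc : b.coeff b.natDegree = b.leadingCoeff := rfl
      have h3 : (z : ℚ) * b.leadingCoeff =
          a.coeff b.natDegree - (a - C (z : ℚ) * b).coeff b.natDegree := by
        rw [coeff_sub, coeff_C_mul, hlc]; ring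
      have h4 : |(z : ℚ)| * |b.leadingCoeff| < 2 * |b.leadingCoeff| := by
        rw [← abs_mul, h3]
        have := abs_sub (a.coeff b.natDegree) ((a - C (z : ℚ) * b).coeff b.natDegree)
        linarith
      have h5 : |(z : ℚ)| < 2 := lt_of_mul_lt_mul_right h4 (abs_nonneg _)
      have h6 : |z| < 2 := by exact_mod_cast h5
      rw [abs_lt] at h6
      have h7 : z = 0 ∨ z = 1 ∨ z = -1 := by omega
      rcases h7 with rfl | rfl | rfl
      · refine ⟨l, by omega, redTo_shift S D l b a q0 hq0 ?_⟩
        simpa using h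
      · refine ⟨l + 1, le_rfl, q0 + 1, S.add_mem hq0 S.one_mem, ?_⟩
        have := (redTo_neg S D l _ _ (redTo_shift S D l _ _ 1 S.one_mem h)).2
        convert this using 1
        · simp
        · simp; ring
      · refine ⟨l + 1, le_rfl, q0 - 1, S.sub_mem hq0 S.one_mem, ?_⟩
        have := redTo_shift S D l _ _ 1 S.one_mem (redTo_neg S D l _ _ h).1
        convert this using 1
        · simp
        · simp; ring

/-- Consecutive leading coefficients are Fibonacci-like. -/
def FibSt (u v : ℚ) (m : ℕ) : Prop :=
  ∃ μ : ℚ, μ ≠ 0 ∧ v = μ * Nat.fib m ∧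
    (u = μ * Nat.fib (m + 1) ∨ u = -(μ * Nat.fib (m + 1)) ∨
      u = μ * Nat.fib (m + 2) ∨ u = -(μ * Nat.fib (m + 2)))

theorem fib_aux (p r e n : ℤ) (hp : 0 < p) (hr : 0 < r)
    (h : |(e * (p + r) + r) - n * (p + r)| ≤ p + r) : n = e ∨ n = e + 1 := by
  rw [abs_le] at h
  have h1 : e - 1 < n := by
    by_contra hh
    nlinarith
  have h2 : n < e + 2 := by
    by_contra hh
    nlinarith
  omega

theorem fibSt_step (u v : ℚ) (t : ℕ) (n : ℤ) (h : FibSt u v (t + 3))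
    (hle : |u - n * v| ≤ |v|) : FibSt v (u - n * v) (t + 2) ∨ FibSt v (u - n * v) (t + 1) := by
  obtain ⟨μ, hμ, rfl, hu⟩ := h
  have f3 : Nat.fib (t + 3) = Nat.fib (t + 1) + Nat.fib (t + 2) := Nat.fib_add_two
  have f4 : Nat.fib (t + 4) = Nat.fib (t + 2) + Nat.fib (t + 3) := Nat.fib_add_two
  have f5 : Nat.fib (t + 5) = Nat.fib (t + 3) + Nat.fib (t + 4) := Nat.fib_add_two
  have hp : 0 < Nat.fib (t + 1) := Nat.fib_pos.mpr (by omega)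
  have hr : 0 < Nat.fib (t + 2) := Nat.fib_pos.mpr (by omega)
  simp only [FibSt]
  have e1 : t + 3 + 1 = t + 4 := rfl
  have e2 : t + 3 + 2 = t + 5 := rfl
  have e3 : t + 2 + 1 = t + 3 := rfl
  have e4 : t + 1 + 2 = t + 3 := rfl
  have e5 : t + 1 + 1 = t + 2 := rfl
  have e6 : t + 2 + 2 = t + 4 := rfl
  rw [e1, e2] at hu
  rw [e3, e4, e5, e6]
  generalize Nat.fib (t + 5) = F5 at *
  generalize Nat.fib (t + 4) = F4 at *
  generalize Nat.fib (t + 3) = F3 at *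
  generalize Nat.fib (t + 2) = r at *
  generalize Nat.fib (t + 1) = p at *
  subst f3 f4 f5
  -- write `u = σ μ (e (p + r) + r)`
  have key : ∃ σ e : ℤ, (σ = 1 ∨ σ = -1) ∧ u = σ * (μ * (e * (p + r) + r)) := by
    rcases hu with rfl | rfl | rfl | rfl
    · exact ⟨1, 1, by simp, by push_cast; ring⟩
    · exact ⟨-1, 1, by simp, by push_cast; ring⟩
    · exact ⟨1, 2, by simp, by push_cast; ring⟩
    · exact ⟨-1, 2, by simp, by push_cast; ring⟩
  clear hu
  obtain ⟨σ, e, hσ, rfl⟩ := key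
  have hσ2 : (σ : ℚ) * σ = 1 := by rcases hσ with rfl | rfl <;> norm_num
  have hσa : |(σ : ℚ)| = 1 := by rcases hσ with rfl | rfl <;> norm_num
  have hw : (σ : ℚ) * (μ * (e * (p + r) + r)) - n * (μ * ((p + r : ℕ) : ℚ)) =
      σ * μ * ((e * (p + r) + r) - (σ * n : ℤ) * (p + r)) := by
    push_cast
    linear_combination (n * μ * (p + r) : ℚ) * hσ2
  rw [hw] at hle ⊢
  have hle2 : |((e * (p + r) + r) - (σ * n) * (p + r) : ℤ)| ≤ (p + r : ℤ) := by
    rw [abs_mul, abs_mul, hσa, one_mul, abs_mul] at hle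
    have := le_of_mul_le_mul_left hle (abs_pos.mpr hμ)
    rw [Nat.abs_cast] at this
    exact_mod_cast this
  have hn := fib_aux p r e (σ * n) (by exact_mod_cast hp) (by exact_mod_cast hr) hle2
  have hσμ : (σ : ℚ) * μ ≠ 0 := by rcases hσ with rfl | rfl <;> simpa
  rcases hn with hn | hn
  · left
    refine ⟨σ * μ, hσμ, by rw [hn]; ring, ?_⟩
    rcases hσ with rfl | rfl
    · left; simp
    · right; left; simp
  · right
    refine ⟨-(σ * μ), neg_ne_zero.mpr hσμ, by rw [hn]; push_cast; ring, ?_⟩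
    rcases hσ with rfl | rfl
    · right; right; right; simp
    · right; right; left; simp

theorem fibSt_ne {u v : ℚ} {m : ℕ} (hm : 0 < m) (h : FibSt u v m) : v ≠ 0 := by
  obtain ⟨μ, hμ, rfl, -⟩ := h
  have := Nat.fib_pos.mpr hm
  positivity

theorem redTo_main (S : Subring ℚ[X]) (hC : ∀ c : ℚ, C c ∈ S → ∃ z : ℤ, c = z) (D : ℕ) :
    ∀ (l m : ℕ) (a b : ℚ[X]), 2 * l + 1 ≤ m → a.degree ≤ D → b.degree ≤ D →
      FibSt (a.coeff D) (b.coeff D) m → ¬ RedTo S D l a b := by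
  intro l
  induction l using Nat.strong_induction_on with
  | _ l ih =>
  intro m a b hm ha hb hF hR
  have hv := fibSt_ne (by omega) hF
  have hbD : b.degree = D := le_antisymm hb (le_degree_of_ne_zero hv)
  cases l with
  | zero => exact absurd hR (not_lt.mpr hbD.ge)
  | succ l =>
    obtain ⟨q, hq, h⟩ := hR
    rcases lt_or_ge (polySz b) (polySz (a - q * b)) with hlt | hle
    · obtain ⟨l', hl', h'⟩ := redTo_peak S hC D l b _ hlt hbD.ge h q hq
      rw [sub_add_cancel] at h'
      exact ih l' (by omega) m a b (by omega) ha hb hF h'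
    · have hb0 : b ≠ 0 := by rintro rfl; simp at hv
      have hrd := polySz_degree_le hle
      have hdeg : (q * b).degree ≤ b.degree := by
        have : q * b = a - (a - q * b) := by ring
        rw [this]
        exact (degree_sub_le _ _).trans (max_le (ha.trans hbD.ge) hrd)
      obtain ⟨z, rfl⟩ := quot_const S hC q b hq hb0 hdeg
      have h2 := polySz_coeff_le hle
      have hnd : b.natDegree = D := natDegree_eq_of_degree_eq_some hbD
      rw [leadingCoeff, hnd] at h2
      have hco : (a - C (z : ℚ) * b).coeff D = a.coeff D - z * b.coeff D := by
        rw [coeff_sub, coeff_C_mul]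
      rw [hco] at h2
      obtain ⟨t, rfl⟩ : ∃ t, m = t + 3 := ⟨m - 3, by omega⟩
      rw [hbD] at hrd
      rcases fibSt_step _ _ t z hF h2 with h3 | h3 <;> rw [← hco] at h3
      · exact ih l (by omega) (t + 2) _ _ (by omega) hb hrd h3 h
      · exact ih l (by omega) (t + 1) _ _ (by omega) hb hrd h3 h

theorem rtau_const (τ : ∀ p : {p : ℕ // p.Prime}, @PadicInt p.1 ⟨p.2⟩) (c : ℚ)
    (h : C c ∈ RtauSet τ) : ∃ z : ℤ, c = z := by
  obtain ⟨h, n, hn, he, hp⟩ := h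
  have hdeg : h.natDegree = 0 := by
    have h1 : (h.map (algebraMap ℤ ℚ)).natDegree = h.natDegree :=
      natDegree_map_eq_of_injective (algebraMap ℤ ℚ).injective_int h
    rw [← h1, ← he, ← C_mul, natDegree_C]
  obtain ⟨z, rfl⟩ : ∃ z, h = C z := ⟨_, eq_C_of_natDegree_eq_zero hdeg⟩
  rw [map_C, ← C_mul, C_inj] at he
  have hd : n ∣ z.natAbs := by
    rw [Nat.dvd_iff_prime_pow_dvd_dvd]
    intro p k hpp hk
    haveI : Fact p.Prime := ⟨hpp⟩
    have h1 := hp ⟨p, hpp⟩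
    simp only [aeval_C] at h1
    have h2 : ((p : ℤ_[p]) ^ (n.factorization p)) ∣ ((z : ℤ) : ℤ_[p]) := by simpa using h1
    rw [PadicInt.pow_p_dvd_int_iff] at h2
    have h3 : k ≤ n.factorization p := (hpp.pow_dvd_iff_le_factorization hn).mp hk
    have h4 : ((p ^ k : ℕ) : ℤ) ∣ z := by
      push_cast
      exact (pow_dvd_pow _ h3).trans h2
    exact Int.natCast_dvd.mp h4
  obtain ⟨w, rfl⟩ := Int.natCast_dvd.mpr hd
  refine ⟨w, ?_⟩
  have hn' : (n : ℚ) ≠ 0 := by exact_mod_cast hn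
  apply mul_left_cancel₀ hn'
  rw [he]; simp

theorem rtau_X (τ : ∀ p : {p : ℕ // p.Prime}, @PadicInt p.1 ⟨p.2⟩) :
    (X : ℚ[X]) ∈ RtauSet τ :=
  ⟨X, 1, one_ne_zero, by simp, by intro p; simp⟩

theorem rtau_div_prime (τ : ∀ p : {p : ℕ // p.Prime}, @PadicInt p.1 ⟨p.2⟩) (f : ℚ[X])
    (hf : f ∈ RtauSet τ) (p : ℕ) (hp : p.Prime) :
    ∃ (g : ℚ[X]) (j : ℤ), g ∈ RtauSet τ ∧ f = C (p : ℚ) * g + C (j : ℚ) := by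
  obtain ⟨h, n, hn, he, hd⟩ := hf
  haveI : Fact p.Prime := ⟨hp⟩
  have hp0 : (p : ℚ) ≠ 0 := by exact_mod_cast hp.ne_zero
  have key : ∃ j : ℤ, ((p : ℤ_[p]) ^ (n.factorization p + 1)) ∣
      aeval (τ ⟨p, hp⟩) h - (n : ℤ_[p]) * (j : ℤ_[p]) := by
    have hc : ((p : ℤ_[p]) ^ (n.factorization p)) ∣ aeval (τ ⟨p, hp⟩) h := hd ⟨p, hp⟩
    obtain ⟨c, hc⟩ := hc
    obtain ⟨n', hn'⟩ := Nat.ordProj_dvd n p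
    have hcop : ¬ p ∣ n' := by
      have := Nat.not_dvd_ordCompl hp hn
      rwa [Nat.div_eq_of_eq_mul_right (pow_pos hp.pos _) hn'] at this
    have hz : (n' : ZMod p) ≠ 0 := by rwa [Ne, ZMod.natCast_eq_zero_iff]
    obtain ⟨j, hj⟩ := ZMod.intCast_surjective ((n' : ZMod p)⁻¹ * PadicInt.toZMod c)
    refine ⟨j, ?_⟩
    have hdv : (p : ℤ_[p]) ∣ c - (n' : ℤ_[p]) * j := by
      rw [← Ideal.mem_span_singleton, ← PadicInt.maximalIdeal_eq_span_p, ← PadicInt.ker_toZMod,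
        RingHom.mem_ker, map_sub, map_mul, map_natCast, map_intCast, hj, mul_inv_cancel_left₀ hz,
        sub_self]
    rw [hc]
    have hnn : (n : ℤ_[p]) = (p : ℤ_[p]) ^ (n.factorization p) * n' := by
      have := congrArg (Nat.cast : ℕ → ℤ_[p]) hn'
      rw [this]; push_cast; rfl
    have : (p : ℤ_[p]) ^ (n.factorization p) * c - (n : ℤ_[p]) * j =
      (p : ℤ_[p]) ^ (n.factorization p) * (c - n' * j) := by rw [hnn]; ring
    rw [this, pow_succ]
    exact mul_dvd_mul_left _ hdv
  obtain ⟨j, hj⟩ := key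
  refine ⟨C ((p : ℚ)⁻¹) * (f - C (j : ℚ)), j, ⟨h - C (n * j : ℤ), n * p,
    mul_ne_zero hn hp.ne_zero, ?_, ?_⟩, ?_⟩
  · rw [Polynomial.map_sub, ← he, map_C, ← mul_assoc, ← C_mul]
    push_cast
    rw [mul_assoc, mul_inv_cancel₀ hp0]
    simp [mul_sub]
  · intro q
    haveI : Fact q.1.Prime := ⟨q.2⟩
    have hfac : (n * p).factorization q.1 = n.factorization q.1 + p.factorization q.1 := by
      rw [Nat.factorization_mul hn hp.ne_zero]; rfl
    show ((q.1 : ℤ_[q.1]) ^ _) ∣ _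
    rw [hfac, hp.factorization]
    by_cases hqp : q.1 = p
    · obtain ⟨q, hq⟩ := q
      simp only at hqp
      subst hqp
      simpa using hj
    · have h0 : Finsupp.single p 1 q.1 = 0 := Finsupp.single_eq_of_ne (by simpa using hqp)
      rw [h0, add_zero, map_sub]
      refine dvd_sub (hd q) ?_
      have : (q.1 : ℤ_[q.1]) ^ (n.factorization q.1) ∣ (n : ℤ_[q.1]) := by
        have := Nat.cast_dvd_cast (α := ℤ_[q.1]) (Nat.ordProj_dvd n q.1)
        rwa [Nat.cast_pow] at this
      rw [aeval_C]
      simp only [algebraMap_int_eq, eq_intCast, Int.cast_mul, Int.cast_natCast]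
      exact this.mul_right _
  · rw [← mul_assoc, ← C_mul, mul_inv_cancel₀ hp0]; simp

theorem rtau_div (τ : ∀ p : {p : ℕ // p.Prime}, @PadicInt p.1 ⟨p.2⟩) (f : ℚ[X])
    (hf : f ∈ RtauSet τ) (m : ℕ) : m ≠ 0 →
    ∃ (g : ℚ[X]) (j : ℤ), g ∈ RtauSet τ ∧ f = C (m : ℚ) * g + C (j : ℚ) := by
  induction m using induction_on_primes with
  | zero => intro h; exact absurd rfl h
  | one => intro _; exact ⟨f, 0, hf, by simp⟩
  | prime_mul p m hp ih =>
    intro h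
    obtain ⟨g, j, hg, he⟩ := ih (right_ne_zero_of_mul h)
    obtain ⟨g', j', hg', he'⟩ := rtau_div_prime τ g hg p hp
    refine ⟨g', m * j' + j, hg', ?_⟩
    rw [he, he']
    push_cast
    simp only [C_mul, C_add]
    ring

theorem redTo_of_chain (S : Subring ℚ[X]) (D l : ℕ) : ∀ (a b : S) (q s : ℕ → S),
    DivChain a b l q s → (s (l + 1) : ℚ[X]).degree < D → RedTo S D l a b := by
  induction l with
  | zero =>
    rintro a b q s ⟨h0, h1, h⟩ hd
    simpa [RedTo, ← h1] using hd
  | succ l ih =>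
    rintro a b q s ⟨h0, h1, h⟩ hd
    refine ⟨q 0, (q 0).2, ?_⟩
    have h2 := ih b (s 2) (fun i => q (i + 1)) (fun i => s (i + 1))
      ⟨h1, rfl, fun i hi => h (i + 1) (by omega)⟩ hd
    have h3 := h 0 (by omega)
    rw [h0, zero_add, h1, zero_add] at h3
    have h4 : (s 2 : ℚ[X]) = a - q 0 * b := by rw [h3]; push_cast; ring
    rwa [h4] at h2

/-- For every `τ` and every positive integer `k`, the ring `R_τ` is not `k`-stage
Euclidean with respect to any norm. -/
theorem stmt_18 (τ : ∀ p : {p : ℕ // p.Prime}, @PadicInt p.1 ⟨p.2⟩)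
    (S : Subring (Polynomial ℚ)) (hS : (S : Set (Polynomial ℚ)) = RtauSet τ)
    (k : ℕ) (hk : 1 ≤ k) :
    ¬ ∃ N : S → ℕ, (∀ a : S, N a = 0 ↔ a = 0) ∧
      ∀ a b : S, b ≠ 0 → ∃ l : ℕ, 1 ≤ l ∧ l ≤ k ∧ ∃ q s : ℕ → S,
        DivChain a b l q s ∧ N (s (l + 1)) < N b := by
  rintro ⟨N, -, hN⟩
  have hmem : ∀ f, f ∈ S ↔ f ∈ RtauSet τ := fun f => by rw [← hS]; rfl
  have hC : ∀ c : ℚ, C c ∈ S → ∃ z : ℤ, c = z := fun c hc => rtau_const τ c ((hmem _).mp hc)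
  -- a nonconstant element of minimal norm
  obtain ⟨b, hb1, hbmin⟩ : ∃ b : S, 1 ≤ (b : ℚ[X]).natDegree ∧
      ∀ c : S, 1 ≤ (c : ℚ[X]).natDegree → N b ≤ N c := by
    have hne : {b : S | 1 ≤ (b : ℚ[X]).natDegree}.Nonempty :=
      ⟨⟨X, (hmem _).mpr (rtau_X τ)⟩, by simp⟩
    exact ⟨Function.argminOn N _ hne, Function.argminOn_mem N _ hne,
      fun c hc => Function.argminOn_le N _ hc⟩
  have hb0 : (b : ℚ[X]) ≠ 0 := by intro h; rw [h] at hb1; simp at hb1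
  set D := (b : ℚ[X]).natDegree with hD
  have hfpos : 0 < Nat.fib (2 * k + 1) := Nat.fib_pos.mpr (by omega)
  obtain ⟨g, j, hg, he⟩ := rtau_div τ b ((hmem _).mp b.2) (Nat.fib (2 * k + 1)) hfpos.ne'
  have hgS := (hmem _).mpr hg
  have hbd : (b : ℚ[X]).degree ≤ D := degree_le_natDegree
  have hfq : (Nat.fib (2 * k + 1) : ℚ) ≠ 0 := by exact_mod_cast hfpos.ne'
  have hgd : g.degree ≤ D := by
    have h1 : C (Nat.fib (2 * k + 1) : ℚ) * g = b - C (j : ℚ) := by rw [he]; ring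
    rw [← degree_C_mul hfq, h1]
    refine (degree_sub_le _ _).trans (max_le hbd (degree_C_le.trans ?_))
    exact_mod_cast Nat.zero_le D
  have hbc : (b : ℚ[X]).coeff D = g.coeff D * Nat.fib (2 * k + 1) := by
    rw [he, coeff_add, coeff_C_mul, coeff_C, if_neg (by omega)]; ring
  have hbc0 : (b : ℚ[X]).coeff D ≠ 0 := leadingCoeff_ne_zero.mpr hb0
  let a : S := ⟨(Nat.fib (2 * k + 1 + 1) : ℚ[X]) * g, S.mul_mem (natCast_mem S _) hgS⟩
  have haC : (a : ℚ[X]) = C (Nat.fib (2 * k + 1 + 1) : ℚ) * g := by simp [a]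
  obtain ⟨l, -, hlk, q, s, hch, hlt⟩ := hN a b (by intro h; exact hb0 (by rw [h]; rfl))
  have hsd : (s (l + 1) : ℚ[X]).degree < D := by
    have h1 : ¬ 1 ≤ (s (l + 1) : ℚ[X]).natDegree := fun h => absurd (hbmin _ h) (by omega)
    refine degree_le_natDegree.trans_lt ?_
    exact_mod_cast (by omega : (s (l + 1) : ℚ[X]).natDegree < D)
  refine redTo_main S hC D l (2 * k + 1) a b (by omega) ?_ hbd ?_
    (redTo_of_chain S D l a b q s hch hsd)
  · rw [haC, degree_C_mul (by exact_mod_cast (Nat.fib_pos.mpr (by omega)).ne')]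
    exact hgd
  · refine ⟨g.coeff D, ?_, hbc, Or.inl ?_⟩
    · intro h; rw [h, zero_mul] at hbc; exact hbc0 hbc
    · rw [haC, coeff_C_mul]; ring
end
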